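/- arXiv:1701.04633 — 2 statements merged into one kernel-verified Lean document; each statement's English description precedes it below -/
import Mathlib

section
/- Let (a_n)_{n≥1} be a sequence of non-negative real numbers and let Z(s) = Σ_{n=1}^∞ a_n n^{-s}. Assume the Dirichlet series Z has abscissa of convergence σ > 0, and that there exists a function G, meromorphic on an open set U ⊆ ℂ containing the closed half-plane {s : Re(s) ≥ σ}, which agrees with Z(s) on {Re(s) > σ}, is holomorphic at every point of the line Re(s) = σ except for a single pole of order w ≥ 1 at s = σ. Let A = lim_{s→σ, s real, s>σ} (s-σ)^w Z(s) (the leading coefficient of the pole). Then Σ_{n≤N} a_n ∼ (A / (σ·(w-1)!)) · N^σ · (log N)^{w-1} as N → ∞, i.e. the quotient of the two sides tends to 1. -/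
open Filter Topology

/-!
Put `b u = e ^ (-σ u) * ∑_{n ≤ e ^ u} a n`. By Abel summation its Laplace transform is
`Z (σ + z) / (σ + z)`, which by hypothesis is a polar part at `z = 0` plus a function `h` continuous
on `Re z ≥ 0`; the polar part is the Laplace transform of a polynomial `q`. Convolve `b - q` with a
kernel whose Fourier transform has compact support: by Parseval on the line `Re z = ε`, and then
`ε → 0`, which the compact support allows, the convolution becomes the Fourier transform of a
compactly supported continuous function, so it tends to `0` by the Riemann-Lebesgue lemma. Hence `b`
and `q` have asymptotically the same averages. Since `e ^ (σ u) * b u` is monotone, averages against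
concentrated kernels bound `b` from above and below: the upper bound comes first and shows that `b`
grows at most polynomially, which controls the tail of the kernel in the lower bound.
-/

section

open MeasureTheory Real FourierTransform SchwartzMap

/-! ### Band-limited kernels -/

/-- A probability density on `ℝ` which is the Fourier transform of a compactly supported Schwartz
function, hence itself rapidly decreasing. The compact support is what makes it possible to pass to
boundary values of a Laplace transform after smoothing with such a kernel. -/
structure IsBandlimitedKernel (F : ℝ → ℝ) : Prop where
  nonneg : ∀ y, 0 ≤ F y
  integral_eq_one : ∫ y, F y = 1
  exists_fourier_eq : ∃ ψ : 𝓢(ℝ, ℂ), HasCompactSupport ψ ∧ ∀ y, 𝓕 ψ y = (F y : ℂ)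

/-- The mass of `F` outside `[-δ, δ]`, weighted by `(1 + |y|) ^ k`. -/
noncomputable def tailMoment (F : ℝ → ℝ) (k : ℕ) (δ : ℝ) : ℝ :=
  ∫ y in {y | δ < |y|}, (1 + |y|) ^ k * F y

lemma measurableSet_lt_abs (δ : ℝ) : MeasurableSet {y : ℝ | δ < |y|} :=
  measurableSet_lt measurable_const measurable_norm

lemma one_add_abs_add_le (x y : ℝ) : 1 + |x + y| ≤ (1 + |x|) * (1 + |y|) := by
  nlinarith [abs_add_le x y, mul_nonneg (abs_nonneg x) (abs_nonneg y)]

lemma integrable_one_add_norm_pow_mul_norm (f : 𝓢(ℝ, ℂ)) (k : ℕ) :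
    Integrable fun y => (1 + ‖y‖) ^ k * ‖f y‖ := by
  refine (((f.integrable_pow_mul volume 0).add (f.integrable_pow_mul volume k)).const_mul
    (2 ^ (k - 1))).mono' (by fun_prop) (.of_forall fun y => ?_)
  calc ‖(1 + ‖y‖) ^ k * ‖f y‖‖ = (1 + ‖y‖) ^ k * ‖f y‖ := Real.norm_of_nonneg (by positivity)
    _ ≤ 2 ^ (k - 1) * (1 ^ k + ‖y‖ ^ k) * ‖f y‖ := by
      gcongr
      exact add_pow_le zero_le_one (norm_nonneg y) k
    _ = 2 ^ (k - 1) * (‖y‖ ^ 0 * ‖f y‖ + ‖y‖ ^ k * ‖f y‖) := by ring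

lemma conj_fourier_of_hermitian {f : ℝ → ℂ} (hf : ∀ t, f (-t) = starRingEnd ℂ (f t)) (y : ℝ) :
    starRingEnd ℂ (𝓕 f y) = 𝓕 f y := by
  rw [Real.fourier_real_eq_integral_exp_smul, ← integral_conj, ← integral_neg_eq_self]
  congr 1 with t
  simp only [smul_eq_mul, map_mul, ← Complex.exp_conj, hf, Complex.conj_conj, Complex.conj_I,
    Complex.conj_ofReal]
  push_cast
  ring_nf

lemma exists_schwartzMap_fourier_eq_ofReal : ∃ (S : 𝓢(ℝ, ℂ)) (R : ℝ → ℝ), HasCompactSupport S ∧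
    (∀ y, 𝓕 S y = (R y : ℂ)) ∧ R 0 ≠ 0 := by
  let B : ContDiffBump (0 : ℝ) := ⟨1, 2, by norm_num, by norm_num⟩
  let φ : ℝ → ℂ := fun t => B t
  have hφ_smooth : ContDiff ℝ (⊤ : ℕ∞) φ := Complex.ofRealCLM.contDiff.comp B.contDiff
  have hφ_supp : HasCompactSupport φ := B.hasCompactSupport.comp_left Complex.ofReal_zero
  have hφ_real : ∀ y, 𝓕 φ y = ((𝓕 φ y).re : ℂ) := fun y =>
    (Complex.conj_eq_iff_re.mp (conj_fourier_of_hermitian (fun t => by simp [φ, B.neg]) y)).symm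
  have hφ_zero : 𝓕 φ 0 = ((∫ t, B t : ℝ) : ℂ) := by
    simp [Real.fourier_real_eq, φ, integral_complex_ofReal]
  refine ⟨hφ_supp.toSchwartzMap hφ_smooth, fun y => (𝓕 φ y).re, hφ_supp, hφ_real, ?_⟩
  simpa [hφ_zero] using B.integral_pos.ne'

lemma hasCompactSupport_convolution {S T : 𝓢(ℝ, ℂ)} (hS : HasCompactSupport S)
    (hT : HasCompactSupport T) :
    HasCompactSupport (convolution (ContinuousLinearMap.mul ℂ ℂ) S T) :=
  (funext (convolution_apply (ContinuousLinearMap.mul ℂ ℂ) S T)) ▸ hS.convolution _ hT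

-- The square of a real Fourier transform `𝓕 S` is nonnegative and equals `𝓕 (S ⋆ S)`.
lemma exists_isBandlimitedKernel : ∃ F, IsBandlimitedKernel F := by
  obtain ⟨S, R, hS, hR, hR0⟩ := exists_schwartzMap_fourier_eq_ofReal
  let T := convolution (ContinuousLinearMap.mul ℂ ℂ) S S
  have hT : ∀ y, 𝓕 T y = ((R y ^ 2 : ℝ) : ℂ) := fun y => by
    simp [T, fourier_convolution, pairing_apply_apply, hR, sq]
  have hR_eq : (fun y => R y ^ 2) = fun y => (𝓕 T y).re :=
    funext fun y => by rw [hT, Complex.ofReal_re]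
  have hR_cont : Continuous fun y => R y ^ 2 := by rw [hR_eq]; fun_prop
  have hR_int : Integrable fun y => R y ^ 2 := hR_eq ▸ (𝓕 T).integrable.re
  have hJ : 0 < ∫ y, R y ^ 2 := integral_pos_of_integrable_nonneg_nonzero (x := 0) hR_cont hR_int
    (fun y => sq_nonneg _) (pow_ne_zero 2 hR0)
  set J := ∫ y, R y ^ 2
  refine ⟨fun y => J⁻¹ * R y ^ 2, fun y => by positivity, ?_, (J⁻¹ : ℂ) • T, ?_, fun y => ?_⟩
  · rw [integral_const_mul, inv_mul_cancel₀ hJ.ne']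
  · exact (hasCompactSupport_convolution hS hS).smul_left (f := fun _ => (J⁻¹ : ℂ))
  · simp [FourierTransform.fourier_smul, hT]

lemma fourier_comp_inv_mul {E : Type*} [NormedAddCommGroup E] [NormedSpace ℂ E] (ψ : ℝ → E)
    {l : ℝ} (hl : l ≠ 0) (y : ℝ) : 𝓕 (fun t => ψ (l⁻¹ * t)) y = |l| • 𝓕 ψ (l * y) := by
  have hsub := Measure.integral_comp_mul_left (fun v : ℝ => 𝐞 (-(v * (l * y))) • ψ v) l⁻¹
  rw [inv_inv] at hsub
  rw [Real.fourier_real_eq, Real.fourier_real_eq, ← hsub]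
  congr 1 with t
  field_simp

namespace IsBandlimitedKernel

variable {F : ℝ → ℝ}

lemma continuous (hF : IsBandlimitedKernel F) : Continuous F := by
  obtain ⟨ψ, -, hψ⟩ := hF.exists_fourier_eq
  exact (Complex.continuous_re.comp (𝓕 ψ).continuous).congr fun y => by simp [hψ]

lemma integrable_one_add_abs_pow_mul (hF : IsBandlimitedKernel F) (k : ℕ) :
    Integrable fun y => (1 + |y|) ^ k * F y := by
  obtain ⟨ψ, -, hψ⟩ := hF.exists_fourier_eq
  refine (integrable_one_add_norm_pow_mul_norm (𝓕 ψ) k).congr (.of_forall fun y => ?_)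
  simp [hψ, abs_of_nonneg (hF.nonneg y)]

lemma integrable (hF : IsBandlimitedKernel F) : Integrable F := by
  simpa using hF.integrable_one_add_abs_pow_mul 0

lemma exists_norm_le (hF : IsBandlimitedKernel F) : ∃ C, ∀ y, ‖F y‖ ≤ C := by
  obtain ⟨ψ, -, hψ⟩ := hF.exists_fourier_eq
  obtain ⟨C, -, hC⟩ := (𝓕 ψ).decay 0 0
  exact ⟨C, fun y => by simpa [hψ] using hC y⟩

lemma setIntegral_compl_tail (hF : IsBandlimitedKernel F) (δ : ℝ) :
    ∫ y in {y | δ < |y|}ᶜ, F y = 1 - tailMoment F 0 δ := by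
  have hsplit := integral_add_compl (measurableSet_lt_abs δ) hF.integrable
  simp only [tailMoment, pow_zero, one_mul]
  linarith [hF.integral_eq_one]

lemma tailMoment_nonneg (hF : IsBandlimitedKernel F) (k : ℕ) (δ : ℝ) : 0 ≤ tailMoment F k δ :=
  integral_nonneg fun y => mul_nonneg (by positivity) (hF.nonneg y)

lemma scale (hF : IsBandlimitedKernel F) {l : ℝ} (hl : 0 < l) :
    IsBandlimitedKernel fun y => l * F (l * y) where
  nonneg y := mul_nonneg hl.le (hF.nonneg _)
  integral_eq_one := by
    rw [integral_const_mul, Measure.integral_comp_mul_left, hF.integral_eq_one,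
      abs_of_pos (by positivity), smul_eq_mul, mul_one, mul_inv_cancel₀ hl.ne']
  exists_fourier_eq := by
    obtain ⟨ψ, hψ_supp, hψ⟩ := hF.exists_fourier_eq
    let e := ContinuousLinearEquiv.unitsEquivAut ℝ (Units.mk0 l⁻¹ (inv_ne_zero hl.ne'))
    refine ⟨compCLMOfContinuousLinearEquiv ℂ e ψ, hψ_supp.comp_homeomorph e.toHomeomorph,
      fun y => ?_⟩
    have he : ⇑(compCLMOfContinuousLinearEquiv ℂ e ψ) = fun t => ψ (l⁻¹ * t) := by
      ext t
      simp [e, mul_comm]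
    rw [fourier_coe, he, fourier_comp_inv_mul _ hl.ne', ← fourier_coe, hψ, abs_of_pos hl]
    simp

lemma tendsto_tailMoment_atTop (hF : IsBandlimitedKernel F) (k : ℕ) :
    Tendsto (tailMoment F k) atTop (𝓝 0) := by
  have hlim : Tendsto (fun δ : ℝ => ∫ y, {y : ℝ | δ < |y|}.indicator
      (fun y => (1 + |y|) ^ k * F y) y) atTop (𝓝 (∫ _ : ℝ, (0 : ℝ))) := by
    have hint := hF.integrable_one_add_abs_pow_mul k
    refine tendsto_integral_filter_of_dominated_convergence _
      (.of_forall fun δ => (hint.indicator (measurableSet_lt_abs δ)).aestronglyMeasurable)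
      (.of_forall fun δ => .of_forall fun y => norm_indicator_le_norm_self _ _)
      hint.norm (.of_forall fun y => tendsto_const_nhds.congr' ?_)
    filter_upwards [eventually_ge_atTop |y|] with δ hδ
    exact (Set.indicator_of_notMem (s := {y : ℝ | δ < |y|}) (not_lt.mpr hδ) _).symm
  simp only [integral_indicator (measurableSet_lt_abs _), integral_zero] at hlim
  exact hlim

lemma tailMoment_scale_le (hF : IsBandlimitedKernel F) (k : ℕ) (δ : ℝ) {l : ℝ} (hl : 1 ≤ l) :
    tailMoment (fun y => l * F (l * y)) k δ ≤ tailMoment F k (l * δ) := by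
  have hl0 : 0 < l := one_pos.trans_le hl
  have hint := (hF.integrable_one_add_abs_pow_mul k).indicator (measurableSet_lt_abs (l * δ))
  have habs : ∀ y, |l * y| = l * |y| := fun y => by rw [abs_mul, abs_of_pos hl0]
  calc tailMoment (fun y => l * F (l * y)) k δ
    _ = ∫ y, {y | δ < |y|}.indicator (fun y => (1 + |y|) ^ k * (l * F (l * y))) y :=
      (integral_indicator (measurableSet_lt_abs δ)).symm
    _ ≤ ∫ y, l * {y | l * δ < |y|}.indicator (fun y => (1 + |y|) ^ k * F y) (l * y) := by
      refine integral_mono (((hF.scale hl0).integrable_one_add_abs_pow_mul k).indicator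
        (measurableSet_lt_abs δ)) ((hint.comp_mul_left' hl0.ne').const_mul l) fun y => ?_
      have hmem : l * δ < |l * y| ↔ δ < |y| := by rw [habs, mul_lt_mul_iff_right₀ hl0]
      simp only [Set.indicator, Set.mem_ofPred_eq, hmem, mul_ite, mul_zero]
      split_ifs with hy
      · have hF0 := hF.nonneg (l * y)
        have hy_le : |y| ≤ |l * y| := habs y ▸ le_mul_of_one_le_left (abs_nonneg y) hl
        rw [mul_left_comm]
        gcongr
      · exact le_rfl
    _ = tailMoment F k (l * δ) := by
      rw [integral_const_mul, Measure.integral_comp_mul_left,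
        integral_indicator (measurableSet_lt_abs _), abs_of_pos (inv_pos.mpr hl0), smul_eq_mul,
        mul_inv_cancel_left₀ hl0.ne', tailMoment]

end IsBandlimitedKernel

lemma exists_isBandlimitedKernel_tailMoment_lt (k : ℕ) {δ η : ℝ} (hδ : 0 < δ) (hη : 0 < η) :
    ∃ F, IsBandlimitedKernel F ∧ tailMoment F k δ < η := by
  obtain ⟨F, hF⟩ := exists_isBandlimitedKernel
  have hlim : Tendsto (fun l => tailMoment F k (l * δ)) atTop (𝓝 0) :=
    (hF.tendsto_tailMoment_atTop k).comp (tendsto_id.atTop_mul_const hδ)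
  obtain ⟨l, hlη, hl⟩ := ((hlim.eventually_lt_const hη).and (eventually_ge_atTop 1)).exists
  exact ⟨_, hF.scale (one_pos.trans_le hl), (hF.tailMoment_scale_le k δ hl).trans_lt hlη⟩

/-! ### Damping, smoothing and the Laplace transform -/

section Operators

variable {E : Type*} [NormedAddCommGroup E] [NormedSpace ℝ E]

/-- The function `f` damped by the convergence factor `e^{-εu}`. -/
noncomputable def damp (ε : ℝ) (f : ℝ → E) (u : ℝ) : E :=
  rexp (-ε * u) • f u

/-- The average of `f` around `x` with weight `F`. -/
noncomputable def smoothing (F : ℝ → ℝ) (f : ℝ → E) (x : ℝ) : E :=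
  ∫ y, F y • f (x + y)

/-- The two-sided Laplace transform; all functions it is applied to vanish on the negative
half-line. -/
noncomputable def laplace (f : ℝ → ℂ) (z : ℂ) : ℂ :=
  ∫ u : ℝ, Complex.exp (-z * u) * f u

lemma norm_damp (ε : ℝ) (f : ℝ → E) (u : ℝ) : ‖damp ε f u‖ = rexp (-ε * u) * ‖f u‖ := by
  rw [damp, norm_smul, Real.norm_of_nonneg (exp_pos _).le]

lemma norm_damp_le {f : ℝ → E} (hf : ∀ u < 0, f u = 0) {ε : ℝ} (hε : 0 ≤ ε) (u : ℝ) :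
    ‖damp ε f u‖ ≤ ‖f u‖ := by
  rcases lt_or_ge u 0 with hu | hu
  · simp [damp, hf u hu]
  · rw [norm_damp]
    exact mul_le_of_le_one_left (norm_nonneg _) (exp_le_one_iff.mpr (by nlinarith))

lemma tendsto_damp (f : ℝ → E) (u : ℝ) : Tendsto (fun ε => damp ε f u) (𝓝[>] 0) (𝓝 (f u)) := by
  have hcont : Continuous fun ε : ℝ => damp ε f u := by unfold damp; fun_prop
  simpa [damp] using (hcont.tendsto 0).mono_left nhdsWithin_le_nhds

lemma damp_sub (ε : ℝ) (f g : ℝ → E) : damp ε (f - g) = damp ε f - damp ε g :=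
  funext fun _ => smul_sub _ _ _

lemma damp_ofReal (ε : ℝ) (f : ℝ → ℝ) :
    damp ε (fun u => (f u : ℂ)) = fun u => ((damp ε f u : ℝ) : ℂ) := by
  ext u
  simp [damp]

lemma smoothing_ofReal (F f : ℝ → ℝ) (x : ℝ) :
    smoothing F (fun u => (f u : ℂ)) x = ((smoothing F f x : ℝ) : ℂ) := by
  simp [smoothing, ← integral_complex_ofReal]

lemma integrable_exp_mul_of_damp {f : ℝ → ℂ} {z : ℂ} (hf : Integrable (damp z.re f)) :
    Integrable fun u : ℝ => Complex.exp (-z * u) * f u := by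
  have hbdd := hf.bdd_mul (f := fun u : ℝ => Complex.exp (((-z.im * u : ℝ) : ℂ) * Complex.I))
    (c := 1) (by fun_prop) (.of_forall fun u => (Complex.norm_exp_ofReal_mul_I _).le)
  refine hbdd.congr (.of_forall fun u => ?_)
  simp only [damp, Complex.real_smul, ← mul_assoc, Complex.ofReal_exp, ← Complex.exp_add]
  congr 2
  apply Complex.ext <;> simp

lemma laplace_sub {f g : ℝ → ℂ} {z : ℂ} (hf : Integrable (damp z.re f))
    (hg : Integrable (damp z.re g)) : laplace (f - g) z = laplace f z - laplace g z := by
  simp only [laplace, Pi.sub_apply, mul_sub]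
  exact integral_sub (integrable_exp_mul_of_damp hf) (integrable_exp_mul_of_damp hg)

lemma fourier_damp (ε : ℝ) (f : ℝ → ℂ) (t : ℝ) :
    𝓕 (damp ε f) t = laplace f (ε + (2 * π * t : ℝ) * Complex.I) := by
  rw [Real.fourier_real_eq_integral_exp_smul, laplace]
  congr 1 with u
  rw [damp, Complex.real_smul, smul_eq_mul, ← mul_assoc, Complex.ofReal_exp, ← Complex.exp_add]
  congr 2
  push_cast
  ring

lemma integrable_damp_of_norm_le_exp {f : ℝ → E} (hf : AEStronglyMeasurable f)
    (hneg : ∀ u < 0, f u = 0) {C κ ε : ℝ} (hC : ∀ u, 0 ≤ u → ‖f u‖ ≤ C * rexp (κ * u))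
    (hε : κ < ε) : Integrable (damp ε f) := by
  have hbound : Integrable ((Set.Ici (0 : ℝ)).indicator fun u => C * rexp (-(ε - κ) * u)) := by
    rw [integrable_indicator_iff measurableSet_Ici, integrableOn_Ici_iff_integrableOn_Ioi]
    exact (exp_neg_integrableOn_Ioi 0 (sub_pos.mpr hε)).const_mul C
  refine hbound.mono' ((by fun_prop : Continuous fun u : ℝ => rexp (-ε * u)).aestronglyMeasurable
    |>.smul hf) (.of_forall fun u => ?_)
  rcases lt_or_ge u 0 with hu | hu
  · simp [damp, hneg u hu, hu]
  · rw [Set.indicator_of_mem (Set.mem_Ici.mpr hu)]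
    calc ‖damp ε f u‖ ≤ rexp (-ε * u) * (C * rexp (κ * u)) := by
          rw [norm_damp]
          gcongr
          exact hC u hu
      _ = C * (rexp (-ε * u) * rexp (κ * u)) := by ring
      _ = C * rexp (-(ε - κ) * u) := by rw [← exp_add]; ring_nf

lemma one_add_pow_le_mul_exp (m : ℕ) {κ u : ℝ} (hκ : 0 < κ) (hu : 0 ≤ u) :
    (1 + u) ^ m ≤ m.factorial / κ ^ m * rexp κ * rexp (κ * u) := by
  have hexp := pow_div_factorial_le_exp (x := κ * (1 + u)) (by positivity) m
  rw [mul_pow, div_le_iff₀ (by positivity), mul_add, mul_one, exp_add] at hexp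
  rw [div_mul_eq_mul_div, div_mul_eq_mul_div, le_div_iff₀ (by positivity)]
  linarith

lemma integrable_damp_of_norm_le_pow {f : ℝ → E} (hf : AEStronglyMeasurable f)
    (hneg : ∀ u < 0, f u = 0) {C : ℝ} {m : ℕ} (hC : ∀ u, ‖f u‖ ≤ C * (1 + |u|) ^ m) {ε : ℝ}
    (hε : 0 < ε) : Integrable (damp ε f) := by
  have hC0 : 0 ≤ C := by simpa using (norm_nonneg _).trans (hC 0)
  refine integrable_damp_of_norm_le_exp hf hneg
    (C := C * (m.factorial / (ε / 2) ^ m * rexp (ε / 2))) (fun u hu => ?_) (half_lt_self hε)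
  rw [mul_assoc C]
  refine (hC u).trans (mul_le_mul_of_nonneg_left ?_ hC0)
  simpa only [abs_of_nonneg hu] using one_add_pow_le_mul_exp m (half_pos hε) hu

lemma smul_damp_add (F : ℝ → ℝ) (ε : ℝ) (f : ℝ → E) (x : ℝ) :
    (fun y => F y • damp ε f (x + y)) = fun y => rexp (-ε * (x + y)) • F y • f (x + y) :=
  funext fun _ => smul_comm _ _ _

lemma tendsto_smoothing_damp {F : ℝ → ℝ} {f : ℝ → E} (hneg : ∀ u < 0, f u = 0) {x : ℝ}
    (hint : Integrable fun y => F y • f (x + y)) :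
    Tendsto (fun ε => smoothing F (damp ε f) x) (𝓝[>] 0) (𝓝 (smoothing F f x)) := by
  refine tendsto_integral_filter_of_dominated_convergence _ (.of_forall fun ε => ?_) ?_ hint.norm
    (.of_forall fun y => (tendsto_damp f (x + y)).const_smul (F y))
  · rw [smul_damp_add]
    exact (by fun_prop : Continuous fun y : ℝ => rexp (-ε * (x + y))).aestronglyMeasurable.smul
      hint.aestronglyMeasurable
  · filter_upwards [self_mem_nhdsWithin] with ε hε
    refine .of_forall fun y => ?_
    rw [norm_smul, norm_smul]
    gcongr
    exact norm_damp_le hneg (Set.mem_Ioi.mp hε).le _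

end Operators

/-! ### Boundary values of the Laplace transform -/

lemma fourier_comp_const_add (f : ℝ → ℂ) (x t : ℝ) :
    𝓕 (fun y => f (x + y)) t = 𝐞 (x * t) • 𝓕 f t := by
  have hshift := congrFun (VectorFourier.fourierIntegral_comp_add_right 𝐞 volume (innerₗ ℝ) f x) t
  simp only [Function.comp_def, add_comm _ x, innerₗ_apply_apply, RCLike.inner_apply,
    conj_trivial, mul_comm t x] at hshift
  exact hshift

lemma integral_fourier_mul_eq {f g : ℝ → ℂ} (hf : Integrable f) (hg : Integrable g) :
    ∫ y, 𝓕 f y * g y = ∫ t, f t * 𝓕 g t := by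
  have hflip := VectorFourier.integral_fourierIntegral_smul_eq_flip (L := innerₗ ℝ)
    (μ := volume) (ν := volume) Real.continuous_fourierChar continuous_inner hf hg
  rwa [flip_innerₗ] at hflip

lemma smoothing_damp_eq_integral_laplace {F : ℝ → ℝ} {ψ : ℝ → ℂ} (hψ : Integrable ψ)
    (hF : ∀ y, 𝓕 ψ y = (F y : ℂ)) {g : ℝ → ℂ} {ε : ℝ} (hg : Integrable (damp ε g)) (x : ℝ) :
    smoothing F (damp ε g) x =
      ∫ t : ℝ, 𝐞 (x * t) • ψ t * laplace g (ε + (2 * π * t : ℝ) * Complex.I) := by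
  simp only [smoothing, Complex.real_smul, ← hF]
  rw [integral_fourier_mul_eq hψ (hg.comp_add_left x)]
  simp only [fourier_comp_const_add, fourier_damp, smul_mul_assoc, mul_smul_comm]

lemma tendsto_integral_mul_vertical_line {h : ℂ → ℂ} {φ : ℝ → ℂ} (hφ : Continuous φ)
    (hφ_supp : HasCompactSupport φ) (hh : ContinuousOn h {z | 0 ≤ z.re}) :
    Tendsto (fun ε : ℝ => ∫ t, φ t * h (ε + (2 * π * t : ℝ) * Complex.I)) (𝓝[>] 0)
      (𝓝 (∫ t, φ t * h ((2 * π * t : ℝ) * Complex.I))) := by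
  have hcont : ContinuousOn (fun ε : ℝ => ∫ t, φ t * h (ε + (2 * π * t : ℝ) * Complex.I))
      (Set.Ici 0) := by
    refine continuousOn_integral_of_compact_support hφ_supp.isCompact ?_ fun ε t _ ht => by
      rw [image_eq_zero_of_notMem_tsupport ht, zero_mul]
    refine (hφ.comp continuous_snd).continuousOn.mul (hh.comp (by fun_prop) fun p hp => ?_)
    simpa using hp.1
  simpa using (hcont 0 Set.self_mem_Ici).tendsto.mono_left
    (nhdsWithin_mono _ Set.Ioi_subset_Ici_self)

lemma tendsto_integral_fourierChar_smul_atTop (f : ℝ → ℂ) :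
    Tendsto (fun x : ℝ => ∫ t, 𝐞 (x * t) • f t) atTop (𝓝 0) := by
  have hneg : Tendsto (fun x : ℝ => -x) atTop (cocompact ℝ) :=
    tendsto_neg_atTop_atBot.mono_right atBot_le_cocompact
  refine ((Real.tendsto_integral_exp_smul_cocompact f).comp hneg).congr fun x => ?_
  simp only [Function.comp_apply, mul_neg, neg_neg, mul_comm]

namespace IsBandlimitedKernel

variable {F : ℝ → ℝ}

lemma exists_tendsto_smoothing_damp (hF : IsBandlimitedKernel F) {g : ℝ → ℂ} {h : ℂ → ℂ}
    (hg : ∀ ε, 0 < ε → Integrable (damp ε g)) (hh : ContinuousOn h {z | 0 ≤ z.re})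
    (hlap : ∀ z : ℂ, 0 < z.re → laplace g z = h z) :
    ∃ B : ℝ → ℂ, (∀ x, Tendsto (fun ε => smoothing F (damp ε g) x) (𝓝[>] 0) (𝓝 (B x))) ∧
      Tendsto B atTop (𝓝 0) := by
  obtain ⟨ψ, hψ_supp, hψ⟩ := hF.exists_fourier_eq
  refine ⟨fun x => ∫ t : ℝ, 𝐞 (x * t) • (ψ t * h ((2 * π * t : ℝ) * Complex.I)), fun x => ?_,
    tendsto_integral_fourierChar_smul_atTop _⟩
  have hlim := tendsto_integral_mul_vertical_line (φ := fun t : ℝ => 𝐞 (x * t) • ψ t)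
    (by fun_prop) (hψ_supp.smul_left (f := fun t : ℝ => 𝐞 (x * t))) hh
  simp only [smul_mul_assoc] at hlim
  refine hlim.congr' ?_
  filter_upwards [self_mem_nhdsWithin] with ε hε
  rw [smoothing_damp_eq_integral_laplace ψ.integrable hψ (hg ε hε)]
  congr 1 with t
  rw [hlap _ (by simpa using hε), smul_mul_assoc]

lemma integrable_smul_comp_add (hF : IsBandlimitedKernel F) {E : Type*} [NormedAddCommGroup E]
    [NormedSpace ℝ E] {f : ℝ → E} (hf : Integrable f) (x : ℝ) :
    Integrable fun y => F y • f (x + y) := by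
  obtain ⟨C, hC⟩ := hF.exists_norm_le
  exact (hf.comp_add_left x).bdd_smul C hF.continuous.aestronglyMeasurable (.of_forall hC)

/-- Fatou's lemma turns the existence of smoothed values in the Abel sense into integrability. -/
lemma integrable_mul_of_tendsto_smoothing_damp (hF : IsBandlimitedKernel F) {b : ℝ → ℝ}
    (hb0 : 0 ≤ b) (hb : ∀ ε, 0 < ε → Integrable (damp ε b)) {x R : ℝ}
    (hR : Tendsto (fun ε => smoothing F (damp ε b) x) (𝓝[>] 0) (𝓝 R)) :
    Integrable fun y => F y * b (x + y) := by
  obtain ⟨ε, -, hε_pos, hε⟩ := exists_seq_strictAnti_tendsto' (zero_lt_one' ℝ)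
  have hε' : Tendsto ε atTop (𝓝[>] 0) :=
    tendsto_nhdsWithin_iff.mpr ⟨hε, .of_forall fun n => (hε_pos n).1⟩
  have hint : ∀ n, Integrable fun y => F y * damp (ε n) b (x + y) := fun n =>
    hF.integrable_smul_comp_add (hb _ (hε_pos n).1) x
  refine integrable_of_tendsto
    (.of_forall fun y => ((tendsto_damp b (x + y)).comp hε').const_mul (F y))
    (fun n => (hint n).aestronglyMeasurable) ?_
  have hnorm : ∀ n y, ‖F y * damp (ε n) b (x + y)‖ = F y * damp (ε n) b (x + y) := fun n y =>
    norm_of_nonneg (mul_nonneg (hF.nonneg y) (smul_nonneg (exp_pos _).le (hb0 _)))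
  have hlintegral : ∀ n, ∫⁻ y, ‖F y * damp (ε n) b (x + y)‖ₑ =
      ENNReal.ofReal (smoothing F (damp (ε n) b) x) := fun n => by
    rw [← ofReal_integral_norm_eq_lintegral_enorm (hint n)]
    simp only [hnorm, smoothing, smul_eq_mul]
  simp only [Function.comp_apply, hlintegral]
  exact (ENNReal.tendsto_ofReal (hR.comp hε')).liminf_eq.trans_ne ENNReal.ofReal_ne_top

end IsBandlimitedKernel

lemma tendsto_inv_pow_smul_comp_add {E : Type*} [NormedAddCommGroup E] [NormedSpace ℝ E]
    {f : ℝ → E} {m : ℕ} {L : E} (hf : Tendsto (fun x => (x ^ m)⁻¹ • f x) atTop (𝓝 L)) (d : ℝ) :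
    Tendsto (fun x => (x ^ m)⁻¹ • f (x + d)) atTop (𝓝 L) := by
  have hratio : Tendsto (fun x : ℝ => (1 + d / x) ^ m) atTop (𝓝 1) := by
    simpa using ((tendsto_const_nhds.div_atTop tendsto_id).const_add (1 : ℝ)).pow m
  have hmul := hratio.smul (hf.comp (tendsto_atTop_add_const_right atTop d tendsto_id))
  rw [one_smul] at hmul
  refine hmul.congr' ?_
  filter_upwards [eventually_gt_atTop 0, eventually_gt_atTop (-d)] with x hx hxd
  have hxd' : x + d ≠ 0 := by linarith
  rw [Function.comp_apply, smul_smul, id, one_add_div hx.ne', div_pow]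
  congr 1
  field_simp

namespace IsBandlimitedKernel

variable {F : ℝ → ℝ}

section PolynomialGrowth

variable {E : Type*} [NormedAddCommGroup E] [NormedSpace ℝ E] {f : ℝ → E} {C : ℝ} {m : ℕ}

lemma norm_smul_comp_add_le (hF : IsBandlimitedKernel F) (hC : ∀ u, ‖f u‖ ≤ C * (1 + |u|) ^ m)
    (x y : ℝ) : ‖F y • f (x + y)‖ ≤ C * (1 + |x|) ^ m * ((1 + |y|) ^ m * F y) := by
  have hC0 : 0 ≤ C := by simpa using (norm_nonneg _).trans (hC 0)
  have hFy := hF.nonneg y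
  calc ‖F y • f (x + y)‖ = F y * ‖f (x + y)‖ := by rw [norm_smul, norm_of_nonneg hFy]
    _ ≤ F y * (C * ((1 + |x|) * (1 + |y|)) ^ m) := by
      gcongr
      refine (hC _).trans ?_
      gcongr
      exact one_add_abs_add_le x y
    _ = C * (1 + |x|) ^ m * ((1 + |y|) ^ m * F y) := by rw [mul_pow]; ring

lemma aestronglyMeasurable_smul_comp_add (hF : IsBandlimitedKernel F)
    (hf : AEStronglyMeasurable f) (x : ℝ) : AEStronglyMeasurable fun y => F y • f (x + y) :=
  hF.continuous.aestronglyMeasurable.smul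
    (hf.comp_measurePreserving (measurePreserving_add_left volume x))

lemma integrable_smul_comp_add_of_norm_le_pow (hF : IsBandlimitedKernel F)
    (hf : AEStronglyMeasurable f) (hC : ∀ u, ‖f u‖ ≤ C * (1 + |u|) ^ m) (x : ℝ) :
    Integrable fun y => F y • f (x + y) :=
  ((hF.integrable_one_add_abs_pow_mul m).const_mul _).mono'
    (hF.aestronglyMeasurable_smul_comp_add hf x) (.of_forall (hF.norm_smul_comp_add_le hC x))

lemma tendsto_inv_pow_smul_smoothing [CompleteSpace E] (hF : IsBandlimitedKernel F)
    (hf : AEStronglyMeasurable f) (hC : ∀ u, ‖f u‖ ≤ C * (1 + |u|) ^ m) {L : E}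
    (hL : Tendsto (fun x => (x ^ m)⁻¹ • f x) atTop (𝓝 L)) :
    Tendsto (fun x => (x ^ m)⁻¹ • smoothing F f x) atTop (𝓝 L) := by
  have hC0 : 0 ≤ C := by simpa using (norm_nonneg _).trans (hC 0)
  have hlim : Tendsto (fun x => ∫ y, (x ^ m)⁻¹ • F y • f (x + y)) atTop (𝓝 (∫ y, F y • L)) := by
    refine tendsto_integral_filter_of_dominated_convergence
      (fun y => C * 2 ^ m * ((1 + |y|) ^ m * F y))
      (.of_forall fun x => (hF.aestronglyMeasurable_smul_comp_add hf x).const_smul _) ?_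
      ((hF.integrable_one_add_abs_pow_mul m).const_mul _) (.of_forall fun y => ?_)
    · filter_upwards [eventually_ge_atTop 1] with x hx
      refine .of_forall fun y => ?_
      have hFy := hF.nonneg y
      have hx_pow : (x ^ m)⁻¹ * (1 + |x|) ^ m ≤ 2 ^ m := by
        rw [inv_mul_le_iff₀ (by positivity), ← mul_pow, abs_of_pos (by linarith)]
        gcongr
        linarith
      calc ‖(x ^ m)⁻¹ • F y • f (x + y)‖
        _ = (x ^ m)⁻¹ * ‖F y • f (x + y)‖ := by rw [norm_smul, norm_of_nonneg (by positivity)]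
        _ ≤ (x ^ m)⁻¹ * (C * (1 + |x|) ^ m * ((1 + |y|) ^ m * F y)) := by
          gcongr
          exact hF.norm_smul_comp_add_le hC x y
        _ = C * ((x ^ m)⁻¹ * (1 + |x|) ^ m) * ((1 + |y|) ^ m * F y) := by ring
        _ ≤ C * 2 ^ m * ((1 + |y|) ^ m * F y) := by gcongr
    · simp only [smul_comm _ (F y)]
      exact (tendsto_inv_pow_smul_comp_add hL y).const_smul (F y)
  rw [integral_smul_const, hF.integral_eq_one, one_smul] at hlim
  simpa only [smoothing, integral_smul] using hlim

end PolynomialGrowth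

theorem integrable_and_tendsto_smoothing_sub (hF : IsBandlimitedKernel F) {b : ℝ → ℝ}
    {p : ℝ → ℂ} {h : ℂ → ℂ} (hb0 : 0 ≤ b) (hbneg : ∀ u < 0, b u = 0)
    (hb : ∀ ε, 0 < ε → Integrable (damp ε b)) (hpneg : ∀ u < 0, p u = 0)
    (hp : ∀ ε, 0 < ε → Integrable (damp ε p)) (hFp : ∀ x, Integrable fun y => F y • p (x + y))
    (hh : ContinuousOn h {z | 0 ≤ z.re})
    (hlap : ∀ z : ℂ, 0 < z.re → laplace (fun u => (b u : ℂ)) z = laplace p z + h z) :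
    (∀ x, Integrable fun y => F y * b (x + y)) ∧
      Tendsto (fun x => ((smoothing F b x : ℝ) : ℂ) - smoothing F p x) atTop (𝓝 0) := by
  have hb' : ∀ ε, 0 < ε → Integrable (damp ε fun u => (b u : ℂ)) := fun ε hε => by
    rw [damp_ofReal]
    exact (hb ε hε).ofReal
  have hdiff : ∀ ε, 0 < ε → Integrable (damp ε ((fun u => (b u : ℂ)) - p)) := fun ε hε => by
    rw [damp_sub]
    exact (hb' ε hε).sub (hp ε hε)
  obtain ⟨B, hB, hB0⟩ := hF.exists_tendsto_smoothing_damp hdiff hh fun z hz => by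
    rw [laplace_sub (hb' _ hz) (hp _ hz), hlap z hz, add_sub_cancel_left]
  have habel : ∀ x, Tendsto (fun ε => ((smoothing F (damp ε b) x : ℝ) : ℂ)) (𝓝[>] 0)
      (𝓝 (B x + smoothing F p x)) := fun x => by
    refine ((hB x).add (tendsto_smoothing_damp hpneg (hFp x))).congr' ?_
    filter_upwards [self_mem_nhdsWithin] with ε hε
    rw [← smoothing_ofReal, ← damp_ofReal, damp_sub]
    simp only [smoothing, Pi.sub_apply, smul_sub]
    rw [integral_sub (hF.integrable_smul_comp_add (hb' ε hε) x)
      (hF.integrable_smul_comp_add (hp ε hε) x), sub_add_cancel]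
  have hint : ∀ x, Integrable fun y => F y * b (x + y) := fun x =>
    hF.integrable_mul_of_tendsto_smoothing_damp hb0 hb
      ((Complex.continuous_re.tendsto _).comp (habel x))
  refine ⟨hint, hB0.congr fun x => eq_sub_of_add_eq ?_⟩
  exact tendsto_nhds_unique (habel x)
    ((Complex.continuous_ofReal.tendsto _).comp (tendsto_smoothing_damp hbneg (hint x)))

end IsBandlimitedKernel

/-! ### Removing the smoothing -/

/-- The Tauberian condition: `e^{σu} b(u)` is nondecreasing, and `b` lives on the positive
half-line. -/
structure IsExpMonotone (σ : ℝ) (b : ℝ → ℝ) : Prop where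
  monotone : Monotone fun u => rexp (σ * u) * b u
  eq_zero_of_neg : ∀ u < 0, b u = 0

namespace IsExpMonotone

variable {σ : ℝ} {b F : ℝ → ℝ} {m : ℕ}

lemma le_exp_mul (hb : IsExpMonotone σ b) {u v : ℝ} (huv : u ≤ v) :
    b u ≤ rexp (σ * (v - u)) * b v := by
  have hle := hb.monotone huv
  rw [mul_sub, exp_sub, div_mul_eq_mul_div, le_div_iff₀ (exp_pos _)]
  linarith

lemma nonneg (hb : IsExpMonotone σ b) : 0 ≤ b := fun u => by
  have hle := hb.monotone (min_le_left u (-1))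
  simp only [hb.eq_zero_of_neg _ (min_lt_of_right_lt neg_one_lt_zero), mul_zero] at hle
  exact nonneg_of_mul_nonneg_right hle (exp_pos _)

lemma measurable (hb : IsExpMonotone σ b) : Measurable b := by
  have hmeas := hb.monotone.measurable
  have hb_eq : b = fun u => rexp (-(σ * u)) * (rexp (σ * u) * b u) := by
    ext u
    rw [← mul_assoc, ← exp_add, neg_add_cancel, exp_zero, one_mul]
  rw [hb_eq]
  fun_prop

lemma le_exp_mul_of_le (hb : IsExpMonotone σ b) (hσ : 0 ≤ σ) {u v d : ℝ} (huv : u ≤ v)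
    (hd : v - u ≤ d) : b u ≤ rexp (σ * d) * b v :=
  (hb.le_exp_mul huv).trans
    (mul_le_mul_of_nonneg_right (exp_le_exp.mpr (mul_le_mul_of_nonneg_left hd hσ)) (hb.nonneg v))

/-- Up to its tail, the kernel centred at `x + δ` lives on `[x, x + 2δ]`. -/
lemma mul_le_smoothing (hb : IsExpMonotone σ b) (hσ : 0 ≤ σ) (hF : IsBandlimitedKernel F)
    {x δ : ℝ} (hint : Integrable fun y => F y * b (x + δ + y)) :
    b x * (1 - tailMoment F 0 δ) ≤ rexp (σ * (2 * δ)) * smoothing F b (x + δ) := by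
  have hmeas := (measurableSet_lt_abs δ).compl
  calc b x * (1 - tailMoment F 0 δ)
    _ = ∫ y in {y | δ < |y|}ᶜ, b x * F y := by
      rw [integral_const_mul, hF.setIntegral_compl_tail]
    _ ≤ ∫ y in {y | δ < |y|}ᶜ, rexp (σ * (2 * δ)) * (F y * b (x + δ + y)) := by
      refine setIntegral_mono_on (hF.integrable.const_mul _).integrableOn
        (hint.const_mul _).integrableOn hmeas fun y hy => ?_
      obtain ⟨hy₁, hy₂⟩ : -δ ≤ y ∧ y ≤ δ := abs_le.mp (by simpa using hy)
      rw [mul_left_comm, mul_comm (b x)]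
      exact mul_le_mul_of_nonneg_left (hb.le_exp_mul_of_le hσ (by linarith) (by linarith))
        (hF.nonneg y)
    _ ≤ ∫ y, rexp (σ * (2 * δ)) * (F y * b (x + δ + y)) :=
      setIntegral_le_integral (hint.const_mul _) (.of_forall fun y =>
        mul_nonneg (exp_pos _).le (mul_nonneg (hF.nonneg y) (hb.nonneg _)))
    _ = rexp (σ * (2 * δ)) * smoothing F b (x + δ) := integral_const_mul _ _

/-- Up to its tail, the kernel centred at `x - δ` lives on `[x - 2δ, x]`. -/
lemma smoothing_le (hb : IsExpMonotone σ b) (hσ : 0 ≤ σ) (hF : IsBandlimitedKernel F)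
    {M : ℝ} (hM : ∀ u, b u ≤ M * (1 + |u|) ^ m) (x δ : ℝ) :
    smoothing F b (x - δ) ≤
      rexp (σ * (2 * δ)) * b x + M * (1 + |x - δ|) ^ m * tailMoment F m δ := by
  have hM' : ∀ u, ‖b u‖ ≤ M * (1 + |u|) ^ m := fun u => by
    rw [norm_of_nonneg (hb.nonneg u)]
    exact hM u
  have hint : Integrable fun y => F y * b (x - δ + y) :=
    hF.integrable_smul_comp_add_of_norm_le_pow hb.measurable.aestronglyMeasurable hM' _
  have htail : ∫ y in {y | δ < |y|}, F y * b (x - δ + y) ≤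
      M * (1 + |x - δ|) ^ m * tailMoment F m δ := by
    rw [tailMoment, ← integral_const_mul]
    exact setIntegral_mono hint.integrableOn
      ((hF.integrable_one_add_abs_pow_mul m).const_mul _).integrableOn fun y =>
        (le_abs_self _).trans (hF.norm_smul_comp_add_le hM' (x - δ) y)
  have hbulk : ∫ y in {y | δ < |y|}ᶜ, F y * b (x - δ + y) ≤ rexp (σ * (2 * δ)) * b x := by
    calc ∫ y in {y | δ < |y|}ᶜ, F y * b (x - δ + y)
      _ ≤ ∫ y in {y | δ < |y|}ᶜ, F y * (rexp (σ * (2 * δ)) * b x) := by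
        refine setIntegral_mono_on hint.integrableOn (hF.integrable.mul_const _).integrableOn
          (measurableSet_lt_abs δ).compl fun y hy => ?_
        obtain ⟨hy₁, hy₂⟩ : -δ ≤ y ∧ y ≤ δ := abs_le.mp (by simpa using hy)
        exact mul_le_mul_of_nonneg_left (hb.le_exp_mul_of_le hσ (by linarith) (by linarith))
          (hF.nonneg y)
      _ = (1 - tailMoment F 0 δ) * (rexp (σ * (2 * δ)) * b x) := by
        rw [integral_mul_const, hF.setIntegral_compl_tail]
      _ ≤ rexp (σ * (2 * δ)) * b x :=
        mul_le_of_le_one_left (mul_nonneg (exp_pos _).le (hb.nonneg x))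
          (sub_le_self 1 (hF.tailMoment_nonneg 0 δ))
  calc smoothing F b (x - δ)
    _ = (∫ y in {y | δ < |y|}, F y * b (x - δ + y)) +
        ∫ y in {y | δ < |y|}ᶜ, F y * b (x - δ + y) :=
      (integral_add_compl (measurableSet_lt_abs δ) hint).symm
    _ ≤ _ := by linarith

lemma exists_le_mul_one_add_abs_pow (hb : IsExpMonotone σ b) (hσ : 0 ≤ σ) {K : ℝ}
    (hK : ∀ᶠ x in atTop, b x / x ^ m ≤ K) : ∃ M, ∀ u, b u ≤ M * (1 + |u|) ^ m := by
  obtain ⟨X, hX, hX_pos⟩ :=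
    ((eventually_forall_ge_atTop.mpr hK).and (eventually_gt_atTop 0)).exists
  have hC : 0 ≤ rexp (σ * X) * b X := mul_nonneg (exp_pos _).le (hb.nonneg X)
  refine ⟨max K (rexp (σ * X) * b X), fun u => ?_⟩
  have hmax : 0 ≤ max K (rexp (σ * X) * b X) := hC.trans (le_max_right _ _)
  have hone : 1 ≤ (1 + |u|) ^ m := one_le_pow₀ (by linarith [abs_nonneg u])
  rcases lt_or_ge u 0 with hu | hu
  · rw [hb.eq_zero_of_neg u hu]
    positivity
  rcases le_or_gt u X with huX | huX
  · calc b u ≤ rexp (σ * X) * b X := hb.le_exp_mul_of_le hσ huX (by linarith)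
      _ ≤ max K (rexp (σ * X) * b X) := le_max_right _ _
      _ ≤ max K (rexp (σ * X) * b X) * (1 + |u|) ^ m := le_mul_of_one_le_right hmax hone
  · have hu_pos : 0 < u := hX_pos.trans huX
    calc b u ≤ K * u ^ m := (div_le_iff₀ (by positivity)).mp (hX u huX.le)
      _ ≤ max K (rexp (σ * X) * b X) * (1 + |u|) ^ m := by
        rw [abs_of_pos hu_pos]
        gcongr
        · exact le_max_left _ _
        · linarith

variable {L : ℝ}

lemma eventually_div_pow_le (hb : IsExpMonotone σ b) (hσ : 0 ≤ σ)
    (hint : ∀ F, IsBandlimitedKernel F → ∀ x, Integrable fun y => F y * b (x + y))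
    (hlim : ∀ F, IsBandlimitedKernel F →
      Tendsto (fun x => (x ^ m)⁻¹ * smoothing F b x) atTop (𝓝 L))
    {δ : ℝ} (hδ : δ ∈ Set.Ioo 0 1) :
    ∀ᶠ x in atTop, b x / x ^ m ≤ rexp (σ * (2 * δ)) * (L + δ) / (1 - δ) := by
  obtain ⟨F, hF, htail⟩ := exists_isBandlimitedKernel_tailMoment_lt 0 hδ.1 hδ.1
  filter_upwards [(tendsto_inv_pow_smul_comp_add (hlim F hF) δ).eventually_le_const
    (lt_add_of_pos_right L hδ.1), eventually_gt_atTop 0] with x hx hx_pos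
  rw [div_eq_inv_mul, le_div_iff₀ (sub_pos.mpr hδ.2)]
  calc (x ^ m)⁻¹ * b x * (1 - δ) ≤ (x ^ m)⁻¹ * (b x * (1 - tailMoment F 0 δ)) := by
        rw [mul_assoc]
        have := hb.nonneg x
        gcongr
    _ ≤ (x ^ m)⁻¹ * (rexp (σ * (2 * δ)) * smoothing F b (x + δ)) :=
      mul_le_mul_of_nonneg_left (hb.mul_le_smoothing hσ hF (hint F hF _)) (by positivity)
    _ = rexp (σ * (2 * δ)) * ((x ^ m)⁻¹ • smoothing F b (x + δ)) := mul_left_comm _ _ _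
    _ ≤ rexp (σ * (2 * δ)) * (L + δ) := by gcongr

lemma eventually_le_div_pow (hb : IsExpMonotone σ b) (hσ : 0 ≤ σ) {M : ℝ}
    (hM : ∀ u, b u ≤ M * (1 + |u|) ^ m)
    (hlim : ∀ F, IsBandlimitedKernel F →
      Tendsto (fun x => (x ^ m)⁻¹ * smoothing F b x) atTop (𝓝 L))
    {δ : ℝ} (hδ : 0 < δ) :
    ∀ᶠ x in atTop, (L - δ - M * 2 ^ m * δ) / rexp (σ * (2 * δ)) ≤ b x / x ^ m := by
  have hM0 : 0 ≤ M := by simpa using (hb.nonneg 0).trans (hM 0)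
  obtain ⟨F, hF, htail⟩ := exists_isBandlimitedKernel_tailMoment_lt m hδ hδ
  filter_upwards [(tendsto_inv_pow_smul_comp_add (hlim F hF) (-δ)).eventually_const_le
    (sub_lt_self L hδ), eventually_ge_atTop 1, eventually_ge_atTop δ] with x hx hx_one hxδ
  have hx_pos : 0 < x := one_pos.trans_le hx_one
  have hpow : (1 + |x - δ|) ^ m ≤ 2 ^ m * x ^ m := by
    rw [← mul_pow, abs_of_nonneg (sub_nonneg.mpr hxδ)]
    gcongr
    linarith
  have htail0 := hF.tailMoment_nonneg m δ
  rw [div_le_iff₀ (exp_pos _), div_mul_eq_mul_div, le_div_iff₀ (by positivity), sub_mul]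
  have hsmooth : (L - δ) * x ^ m ≤ smoothing F b (x - δ) := by
    rwa [smul_eq_mul, inv_mul_eq_div, le_div_iff₀ (by positivity)] at hx
  have herror : M * (1 + |x - δ|) ^ m * tailMoment F m δ ≤ M * 2 ^ m * δ * x ^ m :=
    calc M * (1 + |x - δ|) ^ m * tailMoment F m δ ≤ M * (2 ^ m * x ^ m) * δ := by gcongr
      _ = M * 2 ^ m * δ * x ^ m := by ring
  linarith [hb.smoothing_le hσ hF hM x δ]

end IsExpMonotone

lemma tendsto_of_forall_eventually_bounds {ι κ : Type*} {l : Filter ι} {l' : Filter κ} [l'.NeBot]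
    {f : ι → ℝ} {lo up : κ → ℝ} {L : ℝ} (hlo : Tendsto lo l' (𝓝 L)) (hup : Tendsto up l' (𝓝 L))
    (hlo_le : ∀ᶠ k in l', ∀ᶠ i in l, lo k ≤ f i) (hle_up : ∀ᶠ k in l', ∀ᶠ i in l, f i ≤ up k) :
    Tendsto f l (𝓝 L) := by
  refine tendsto_order.mpr ⟨fun r hr => ?_, fun r hr => ?_⟩
  · obtain ⟨k, hrk, hk⟩ := ((hlo.eventually_const_lt hr).and hlo_le).exists
    exact hk.mono fun i hi => hrk.trans_le hi
  · obtain ⟨k, hkr, hk⟩ := ((hup.eventually_lt_const hr).and hle_up).exists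
    exact hk.mono fun i hi => hi.trans_lt hkr

namespace IsExpMonotone

variable {σ : ℝ} {b : ℝ → ℝ} {m : ℕ} {L : ℝ}

theorem tendsto_div_pow_of_forall_smoothing (hb : IsExpMonotone σ b) (hσ : 0 ≤ σ)
    (hint : ∀ F, IsBandlimitedKernel F → ∀ x, Integrable fun y => F y * b (x + y))
    (hlim : ∀ F, IsBandlimitedKernel F →
      Tendsto (fun x => (x ^ m)⁻¹ * smoothing F b x) atTop (𝓝 L)) :
    Tendsto (fun x => b x / x ^ m) atTop (𝓝 L) := by
  have hupper := fun δ hδ => hb.eventually_div_pow_le hσ hint hlim (δ := δ) hδ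
  obtain ⟨M, hM⟩ := hb.exists_le_mul_one_add_abs_pow hσ (hupper 2⁻¹ (by norm_num))
  have hup : ContinuousAt (fun δ : ℝ => rexp (σ * (2 * δ)) * (L + δ) / (1 - δ)) 0 :=
    ContinuousAt.div (by fun_prop) (by fun_prop) (by norm_num)
  have hlo : ContinuousAt (fun δ : ℝ => (L - δ - M * 2 ^ m * δ) / rexp (σ * (2 * δ))) 0 :=
    ContinuousAt.div (by fun_prop) (by fun_prop) (exp_pos _).ne'
  have hup' := hup.tendsto.mono_left (nhdsWithin_le_nhds (s := Set.Ioi 0))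
  have hlo' := hlo.tendsto.mono_left (nhdsWithin_le_nhds (s := Set.Ioi 0))
  simp only [mul_zero, exp_zero, sub_zero, add_zero, one_mul, div_one] at hup' hlo'
  refine tendsto_of_forall_eventually_bounds hlo' hup' ?_ ?_
  · filter_upwards [self_mem_nhdsWithin] with δ hδ using hb.eventually_le_div_pow hσ hM hlim hδ
  · filter_upwards [Ioo_mem_nhdsGT one_pos] with δ hδ using hupper δ hδ

theorem tendsto_div_pow_of_laplace (hb : IsExpMonotone σ b) (hσ : 0 ≤ σ)
    (hb_int : ∀ ε, 0 < ε → Integrable (damp ε b)) {p : ℝ → ℂ} (hp : AEStronglyMeasurable p)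
    (hpneg : ∀ u < 0, p u = 0) {C : ℝ} (hC : ∀ u, ‖p u‖ ≤ C * (1 + |u|) ^ m)
    (hpL : Tendsto (fun u : ℝ => (u ^ m)⁻¹ • p u) atTop (𝓝 (L : ℂ)))
    {h : ℂ → ℂ} (hh : ContinuousOn h {z | 0 ≤ z.re})
    (hlap : ∀ z : ℂ, 0 < z.re → laplace (fun u => (b u : ℂ)) z = laplace p z + h z) :
    Tendsto (fun x => b x / x ^ m) atTop (𝓝 L) := by
  have hcompare := fun F (hF : IsBandlimitedKernel F) =>
    hF.integrable_and_tendsto_smoothing_sub hb.nonneg hb.eq_zero_of_neg hb_int hpneg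
      (fun ε hε => integrable_damp_of_norm_le_pow hp hpneg hC hε)
      (hF.integrable_smul_comp_add_of_norm_le_pow hp hC) hh hlap
  refine hb.tendsto_div_pow_of_forall_smoothing hσ (fun F hF => (hcompare F hF).1) fun F hF => ?_
  have hbounded : IsBoundedUnder (· ≤ ·) atTop fun x : ℝ => ‖(x ^ m)⁻¹‖ := by
    refine isBoundedUnder_of_eventually_le (a := 1) ?_
    filter_upwards [eventually_ge_atTop 1] with x hx
    rw [norm_inv, norm_of_nonneg (by positivity)]
    exact inv_le_one_of_one_le₀ (one_le_pow₀ hx)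
  have hdiff := hbounded.smul_tendsto_zero (hcompare F hF).2
  have hsum := hdiff.add (hF.tendsto_inv_pow_smul_smoothing hp hC hpL)
  simp only [smul_sub, sub_add_cancel, zero_add] at hsum
  refine ((Complex.continuous_re.tendsto _).comp hsum).congr fun x => ?_
  rw [Function.comp_apply, Complex.smul_re, Complex.ofReal_re, smul_eq_mul]

end IsExpMonotone

/-! ### Polar parts -/

/-- The function `u ↦ u ^ j` on the positive half-line, extended by `0`. -/
noncomputable def truncPow (j : ℕ) : ℝ → ℂ :=
  (Set.Ioi 0).indicator fun u => (u : ℂ) ^ j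

/-- The polar part `∑_{j < n} c_j / z^{j+1}` of a Laurent expansion at `0`. -/
noncomputable def polarPart (c : ℕ → ℂ) (n : ℕ) (z : ℂ) : ℂ :=
  ∑ j ∈ Finset.range n, c j / z ^ (j + 1)

/-- The function on the positive half-line whose Laplace transform is `polarPart c n`. -/
noncomputable def polarDensity (c : ℕ → ℂ) (n : ℕ) (u : ℝ) : ℂ :=
  ∑ j ∈ Finset.range n, c j / j.factorial * truncPow j u

lemma truncPow_of_neg (j : ℕ) {u : ℝ} (hu : u < 0) : truncPow j u = 0 :=
  Set.indicator_of_notMem (by simpa using hu.le) _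

lemma measurable_truncPow (j : ℕ) : Measurable (truncPow j) :=
  (by fun_prop : Measurable fun u : ℝ => (u : ℂ) ^ j).indicator measurableSet_Ioi

lemma norm_truncPow_le (j : ℕ) (u : ℝ) : ‖truncPow j u‖ ≤ (1 + |u|) ^ j := by
  refine (norm_indicator_le_norm_self _ _).trans ?_
  rw [norm_pow, Complex.norm_real, norm_eq_abs]
  gcongr
  linarith

lemma exp_mul_truncPow (j : ℕ) (z : ℂ) : (fun u : ℝ => Complex.exp (-z * u) * truncPow j u) =
    (Set.Ioi 0).indicator fun u : ℝ => Complex.exp (-z * u) * (u : ℂ) ^ j :=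
  funext fun _ => (Set.indicator_mul_right _ (fun u : ℝ => Complex.exp (-z * u)) _).symm

lemma laplace_truncPow_eq_setIntegral (j : ℕ) (z : ℂ) :
    laplace (truncPow j) z = ∫ u : ℝ in Set.Ioi 0, Complex.exp (-z * u) * (u : ℂ) ^ j := by
  rw [laplace, exp_mul_truncPow, integral_indicator measurableSet_Ioi]

lemma integrable_exp_mul_truncPow (j : ℕ) {z : ℂ} (hz : 0 < z.re) :
    Integrable fun u : ℝ => Complex.exp (-z * u) * truncPow j u :=
  integrable_exp_mul_of_damp <| integrable_damp_of_norm_le_pow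
    (measurable_truncPow j).aestronglyMeasurable (fun _ => truncPow_of_neg j)
    (C := 1) (fun u => (one_mul ((1 + |u|) ^ j)).symm ▸ norm_truncPow_le j u) hz

lemma integrableOn_exp_mul_pow (j : ℕ) {z : ℂ} (hz : 0 < z.re) :
    IntegrableOn (fun u : ℝ => Complex.exp (-z * u) * (u : ℂ) ^ j) (Set.Ioi 0) := by
  rw [← integrable_indicator_iff measurableSet_Ioi, ← exp_mul_truncPow]
  exact integrable_exp_mul_truncPow j hz

lemma mul_laplace_truncPow_succ (j : ℕ) {z : ℂ} (hz : 0 < z.re) :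
    z * laplace (truncPow (j + 1)) z = (j + 1) * laplace (truncPow j) z := by
  have hderiv : ∀ u : ℝ, HasDerivAt (fun u : ℝ => Complex.exp (-z * u) * (u : ℂ) ^ (j + 1))
      ((j + 1) * (Complex.exp (-z * u) * (u : ℂ) ^ j) -
        z * (Complex.exp (-z * u) * (u : ℂ) ^ (j + 1))) u := fun u => by
    have hmul := (((hasDerivAt_id (u : ℂ)).const_mul (-z)).cexp.mul
      (hasDerivAt_pow (j + 1) (u : ℂ))).comp_ofReal
    refine hmul.congr_deriv ?_
    simp only [id, Nat.add_sub_cancel]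
    push_cast
    ring
  have hint := (integrableOn_exp_mul_pow j hz).const_mul (j + 1 : ℂ)
  have hint_succ := (integrableOn_exp_mul_pow (j + 1) hz).const_mul z
  have hlim := tendsto_zero_of_hasDerivAt_of_integrableOn_Ioi (fun u _ => hderiv u)
    (hint.sub hint_succ) (integrableOn_exp_mul_pow (j + 1) hz)
  have hftc := integral_Ioi_of_hasDerivAt_of_tendsto' (fun u _ => hderiv u)
    (hint.sub hint_succ) hlim
  rw [integral_sub hint hint_succ, integral_const_mul, integral_const_mul] at hftc
  simp only [laplace_truncPow_eq_setIntegral]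
  exact (sub_eq_zero.mp (hftc.trans (by simp))).symm

lemma laplace_truncPow (j : ℕ) {z : ℂ} (hz : 0 < z.re) :
    laplace (truncPow j) z = j.factorial / z ^ (j + 1) := by
  have hz0 : z ≠ 0 := Complex.ne_zero_of_re_pos hz
  induction j with
  | zero =>
    rw [laplace_truncPow_eq_setIntegral]
    simpa using integral_exp_mul_complex_Ioi (a := -z) (by simpa using hz) 0
  | succ j ih =>
    rw [← mul_right_inj' hz0, mul_laplace_truncPow_succ j hz, ih, Nat.factorial_succ]
    push_cast
    field_simp
    rw [pow_succ _ (j + 1), mul_assoc]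

section PolarDensity

variable (c : ℕ → ℂ)

lemma polarDensity_of_neg (n : ℕ) {u : ℝ} (hu : u < 0) : polarDensity c n u = 0 :=
  Finset.sum_eq_zero fun j _ => by rw [truncPow_of_neg j hu, mul_zero]

lemma measurable_polarDensity (n : ℕ) : Measurable (polarDensity c n) :=
  Finset.measurable_fun_sum _ fun j _ => (measurable_truncPow j).const_mul _

lemma laplace_polarDensity (n : ℕ) {z : ℂ} (hz : 0 < z.re) :
    laplace (polarDensity c n) z = polarPart c n z := by
  simp only [laplace, polarDensity, Finset.mul_sum, mul_left_comm (Complex.exp _)]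
  rw [integral_finsetSum _ fun j _ => (integrable_exp_mul_truncPow j hz).const_mul _]
  refine Finset.sum_congr rfl fun j _ => ?_
  rw [integral_const_mul, ← laplace, laplace_truncPow j hz,
    div_mul_div_cancel₀ (by exact_mod_cast j.factorial_ne_zero)]

lemma norm_polarDensity_le (m : ℕ) (u : ℝ) : ‖polarDensity c (m + 1) u‖ ≤
    (∑ j ∈ Finset.range (m + 1), ‖c j / j.factorial‖) * (1 + |u|) ^ m := by
  rw [Finset.sum_mul]
  refine norm_sum_le_of_le _ fun j hj => ?_
  rw [norm_mul]
  refine mul_le_mul_of_nonneg_left ((norm_truncPow_le j u).trans ?_) (norm_nonneg _)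
  exact pow_le_pow_right₀ (by linarith [abs_nonneg u])
    (Nat.lt_succ_iff.mp (Finset.mem_range.mp hj))

lemma tendsto_inv_pow_smul_truncPow {j m : ℕ} (hj : j ≤ m) :
    Tendsto (fun u : ℝ => (u ^ m)⁻¹ • truncPow j u) atTop (𝓝 (if j = m then 1 else 0)) := by
  have hpow : ∀ᶠ u : ℝ in atTop, ((u ^ (m - j))⁻¹ : ℝ) = (u ^ m)⁻¹ • truncPow j u := by
    filter_upwards [eventually_gt_atTop 0] with u hu
    have hu' : (u : ℂ) ≠ 0 := by exact_mod_cast hu.ne'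
    rw [truncPow, Set.indicator_of_mem (Set.mem_Ioi.mpr hu), Complex.real_smul,
      pow_sub₀ u hu.ne' hj]
    push_cast
    field_simp
  refine Tendsto.congr' hpow ?_
  split_ifs with hjm
  · simp [hjm]
  · rw [← Complex.ofReal_zero]
    exact (Complex.continuous_ofReal.tendsto 0).comp
      (tendsto_inv_atTop_zero.comp (tendsto_pow_atTop (by omega)))

lemma tendsto_inv_pow_smul_polarDensity (m : ℕ) :
    Tendsto (fun u : ℝ => (u ^ m)⁻¹ • polarDensity c (m + 1) u) atTop
      (𝓝 (c m / m.factorial)) := by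
  have hsum := tendsto_finsetSum (Finset.range (m + 1)) fun j hj =>
    (tendsto_inv_pow_smul_truncPow (Nat.lt_succ_iff.mp (Finset.mem_range.mp hj))).const_mul
      (c j / j.factorial)
  simpa [polarDensity, Finset.mul_sum, mul_left_comm] using hsum

end PolarDensity

lemma continuousAt_polarPart (c : ℕ → ℂ) (n : ℕ) {z : ℂ} (hz : z ≠ 0) :
    ContinuousAt (polarPart c n) z :=
  tendsto_finsetSum _ fun j _ =>
    (continuousAt_const.div (continuousAt_id.pow (j + 1)) (pow_ne_zero _ hz) :)

lemma exists_polarPart_taylor {f : ℂ → ℂ} (hf : AnalyticAt ℂ f 0) (m : ℕ) :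
    ∃ (c : ℕ → ℂ) (R : ℂ → ℂ), c m = f 0 ∧ ContinuousAt R 0 ∧
      ∀ z ≠ 0, f z = z ^ (m + 1) * (polarPart c (m + 1) z + R z) := by
  obtain ⟨R, hR, hf_eq⟩ := hf.exists_eq_sum_add_pow_mul (m + 1)
  refine ⟨fun j => iteratedDeriv (m - j) f 0 / (m - j).factorial, R, by simp, hR.continuousAt,
    fun z hz => ?_⟩
  rw [hf_eq z, mul_add, polarPart, Finset.mul_sum, ← Finset.sum_range_reflect, smul_eq_mul]
  congr 1
  refine Finset.sum_congr rfl fun j hj => ?_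
  have hj' : j ≤ m := Nat.lt_succ_iff.mp (Finset.mem_range.mp hj)
  rw [Nat.add_sub_cancel, show m + 1 = m - j + (j + 1) by omega, pow_add, smul_eq_mul]
  field_simp

/-- The remainder `g - polarPart` is extended to `0` by the value of the Taylor remainder of
`z ^ (m + 1) * g z`. -/
lemma exists_polarPart_add_continuousOn {f g : ℂ → ℂ} {S : Set ℂ} {m : ℕ} (hf : AnalyticAt ℂ f 0)
    (hfg : ∀ᶠ z in 𝓝[S \ {0}] 0, z ^ (m + 1) * g z = f z) (hg : ContinuousOn g (S \ {0})) :
    ∃ (c : ℕ → ℂ) (h : ℂ → ℂ), c m = f 0 ∧ ContinuousOn h S ∧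
      ∀ z ≠ 0, g z = polarPart c (m + 1) z + h z := by
  obtain ⟨c, R, hcm, hR, hf_eq⟩ := exists_polarPart_taylor hf m
  refine ⟨c, Function.update (fun z => g z - polarPart c (m + 1) z) 0 (R 0), hcm, ?_,
    fun z hz => by rw [Function.update_of_ne hz, add_sub_cancel]⟩
  refine continuousOn_update_iff.mpr ⟨hg.sub fun z hz =>
    (continuousAt_polarPart c (m + 1) hz.2).continuousWithinAt, fun _ => ?_⟩
  refine (hR.tendsto.mono_left nhdsWithin_le_nhds).congr' ?_
  filter_upwards [hfg, self_mem_nhdsWithin] with z hz hzS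
  rw [hf_eq z hzS.2] at hz
  exact eq_sub_of_add_eq' (mul_left_cancel₀ (pow_ne_zero _ hzS.2) hz).symm

/-! ### Summatory functions of Dirichlet series -/

/-- The summatory function of `a` in the variable `u = log t`, normalised by `e^{-σu}`. -/
noncomputable def scaledSum (a : ℕ → ℝ) (σ u : ℝ) : ℝ :=
  rexp (-σ * u) * ∑ n ∈ Finset.Icc 1 ⌊rexp u⌋₊, a n

/-- Rankin's trick. -/
lemma sum_Icc_norm_le_rpow_mul_tsum {f : ℕ → ℂ} {r : ℝ} (hr : 0 ≤ r) (hf : LSeriesSummable f r)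
    (N : ℕ) : ∑ n ∈ Finset.Icc 1 N, ‖f n‖ ≤ (N : ℝ) ^ r * ∑' n, ‖LSeries.term f r n‖ := by
  calc ∑ n ∈ Finset.Icc 1 N, ‖f n‖
    _ ≤ ∑ n ∈ Finset.Icc 1 N, (N : ℝ) ^ r * ‖LSeries.term f r n‖ := by
      refine Finset.sum_le_sum fun n hn => ?_
      obtain ⟨hn_pos, hnN⟩ := Finset.mem_Icc.mp hn
      have hn_pow : 0 < (n : ℝ) ^ r := rpow_pos_of_pos (by exact_mod_cast hn_pos) r
      rw [LSeries.norm_term_eq, if_neg (by omega), Complex.ofReal_re, mul_div_left_comm]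
      exact le_mul_of_one_le_right (norm_nonneg _) ((one_le_div hn_pow).mpr (by gcongr))
    _ ≤ (N : ℝ) ^ r * ∑' n, ‖LSeries.term f r n‖ := by
      rw [← Finset.mul_sum]
      gcongr
      exact hf.norm.sum_le_tsum _ fun _ _ => norm_nonneg _

section ScaledSum

variable {a : ℕ → ℝ} {σ : ℝ}

lemma exp_mul_scaledSum (a : ℕ → ℝ) (σ u : ℝ) :
    rexp (σ * u) * scaledSum a σ u = ∑ n ∈ Finset.Icc 1 ⌊rexp u⌋₊, a n := by
  rw [scaledSum, ← mul_assoc, ← exp_add, neg_mul, add_neg_cancel, exp_zero, one_mul]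

lemma isExpMonotone_scaledSum (ha : ∀ n, 0 ≤ a n) (σ : ℝ) : IsExpMonotone σ (scaledSum a σ) where
  monotone u v huv := by
    simp only [exp_mul_scaledSum]
    exact Finset.sum_le_sum_of_subset_of_nonneg
      (Finset.Icc_subset_Icc_right (Nat.floor_mono (exp_le_exp.mpr huv))) fun n _ _ => ha n
  eq_zero_of_neg u hu := by
    simp [scaledSum, Nat.floor_eq_zero.mpr (exp_lt_one_iff.mpr hu)]

lemma sum_Icc_le_rpow_mul_tsum (ha : ∀ n, 0 ≤ a n) {r : ℝ} (hr : 0 ≤ r)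
    (hs : LSeriesSummable (fun n => (a n : ℂ)) r) (N : ℕ) : ∑ n ∈ Finset.Icc 1 N, a n ≤
      (N : ℝ) ^ r * ∑' n, ‖LSeries.term (fun n => (a n : ℂ)) r n‖ := by
  simpa [abs_of_nonneg (ha _)] using sum_Icc_norm_le_rpow_mul_tsum hr hs N

lemma integrable_damp_scaledSum (ha : ∀ n, 0 ≤ a n) (hσ : 0 ≤ σ)
    (hconv : ∀ s : ℂ, σ < s.re → LSeriesSummable (fun n => (a n : ℂ)) s) {ε : ℝ} (hε : 0 < ε) :
    Integrable (damp ε (scaledSum a σ)) := by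
  have hb := isExpMonotone_scaledSum ha σ
  have hsum := sum_Icc_le_rpow_mul_tsum ha (r := σ + ε / 2) (by positivity)
    (hconv _ (by simpa using hε))
  set C := ∑' n, ‖LSeries.term (fun n => (a n : ℂ)) (σ + ε / 2 : ℝ) n‖
  have hC : 0 ≤ C := tsum_nonneg fun _ => norm_nonneg _
  refine integrable_damp_of_norm_le_exp hb.measurable.aestronglyMeasurable hb.eq_zero_of_neg
    (C := C) (fun u _ => ?_) (half_lt_self hε)
  calc ‖scaledSum a σ u‖ = rexp (-σ * u) * ∑ n ∈ Finset.Icc 1 ⌊rexp u⌋₊, a n :=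
        norm_of_nonneg (hb.nonneg u)
    _ ≤ rexp (-σ * u) * (rexp u ^ (σ + ε / 2) * C) := by
      gcongr
      refine (hsum _).trans (mul_le_mul_of_nonneg_right ?_ hC)
      gcongr
      exact Nat.floor_le (exp_pos u).le
    _ = C * (rexp (-σ * u) * rexp (u * (σ + ε / 2))) := by rw [exp_mul u]; ring
    _ = C * rexp (ε / 2 * u) := by rw [← exp_add]; ring_nf

lemma ofReal_add_ne_zero (hσ : 0 < σ) {z : ℂ} (hz : 0 ≤ z.re) : (σ : ℂ) + z ≠ 0 :=
  Complex.ne_zero_of_re_pos (by simpa using add_pos_of_pos_of_nonneg hσ hz)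

lemma LSeries_ofReal_eq_mul_integral (ha : ∀ n, 0 ≤ a n) (hσ : 0 ≤ σ)
    (hconv : ∀ s : ℂ, σ < s.re → LSeriesSummable (fun n => (a n : ℂ)) s) {s : ℂ} (hs : σ < s.re) :
    LSeries (fun n => (a n : ℂ)) s =
      s * ∫ t in Set.Ioi (1 : ℝ), (∑ n ∈ Finset.Icc 1 ⌊t⌋₊, (a n : ℂ)) * (t : ℂ) ^ (-(s + 1)) := by
  obtain ⟨r, hσr, hrs⟩ := exists_between hs
  refine LSeries_eq_mul_integral_of_nonneg a (hσ.trans hσr.le) hrs (.of_bound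
    (∑' n, ‖LSeries.term (fun n => (a n : ℂ)) r n‖) (.of_forall fun N => ?_)) ha
  rw [norm_of_nonneg (Finset.sum_nonneg fun n _ => ha n), norm_of_nonneg (by positivity), mul_comm]
  exact sum_Icc_le_rpow_mul_tsum ha (hσ.trans hσr.le) (hconv _ (by simpa using hσr)) N

/-- Abel summation, after the substitution `t = e^u`. -/
lemma laplace_scaledSum (ha : ∀ n, 0 ≤ a n) (hσ : 0 < σ)
    (hconv : ∀ s : ℂ, σ < s.re → LSeriesSummable (fun n => (a n : ℂ)) s) {z : ℂ} (hz : 0 < z.re) :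
    laplace (fun u => (scaledSum a σ u : ℂ)) z =
      LSeries (fun n => (a n : ℂ)) (σ + z) / (σ + z) := by
  rw [LSeries_ofReal_eq_mul_integral ha hσ.le hconv (by simpa using hz),
    mul_div_cancel_left₀ _ (ofReal_add_ne_zero hσ hz.le), ← exp_zero, ← integral_comp_exp_Ioi,
    ← integral_Ici_eq_integral_Ioi, laplace, ← setIntegral_eq_integral_of_forall_compl_eq_zero
      (s := Set.Ici (0 : ℝ)) fun u hu => by
        rw [(isExpMonotone_scaledSum ha σ).eq_zero_of_neg u (by simpa using hu),
          Complex.ofReal_zero, mul_zero]]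
  refine setIntegral_congr_fun measurableSet_Ici fun u _ => ?_
  have hcpow : ((rexp u : ℝ) : ℂ) ^ (-((σ : ℂ) + z + 1)) = Complex.exp (-(σ + z + 1) * u) := by
    rw [Complex.cpow_def_of_ne_zero (by exact_mod_cast (exp_pos u).ne'),
      ← Complex.ofReal_log (exp_pos u).le, log_exp, mul_comm]
  have hexp : Complex.exp (-z * u) * Complex.exp (-(σ : ℂ) * u) =
      Complex.exp u * Complex.exp (-(σ + z + 1) * u) := by
    rw [← Complex.exp_add, ← Complex.exp_add]
    ring_nf
  simp only [scaledSum, hcpow, Complex.real_smul]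
  push_cast
  linear_combination (∑ n ∈ Finset.Icc 1 ⌊rexp u⌋₊, (a n : ℂ)) * hexp

end ScaledSum

/-! ### The Tauberian theorem -/

section Delange

variable {a : ℕ → ℝ} {σ : ℝ} {m : ℕ} {G H : ℂ → ℂ}

lemma tendsto_const_add_nhdsWithin_diff_singleton (σ : ℝ) :
    Tendsto (fun z : ℂ => σ + z) (𝓝[{z | 0 ≤ z.re} \ {0}] 0)
      (𝓝[{s | σ ≤ s.re} \ {(σ : ℂ)}] (σ : ℂ)) := by
  have hcont : ContinuousWithinAt (fun z : ℂ => σ + z) ({z | 0 ≤ z.re} \ {0}) 0 := by fun_prop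
  simpa using hcont.tendsto_nhdsWithin fun z hz => by simpa using hz

lemma tendsto_ofReal_nhdsWithin_diff_singleton (σ : ℝ) :
    Tendsto (fun s : ℝ => (s : ℂ)) (𝓝[>] σ) (𝓝[{s | σ ≤ s.re} \ {(σ : ℂ)}] (σ : ℂ)) :=
  Complex.continuous_ofReal.continuousWithinAt.tendsto_nhdsWithin fun s (hs : σ < s) => by
    simpa using ⟨hs.le, hs.ne'⟩

lemma exists_laplace_scaledSum_eq_polarPart_add (ha : ∀ n, 0 ≤ a n) (hσ : 0 < σ)
    (hconv : ∀ s : ℂ, σ < s.re → LSeriesSummable (fun n => (a n : ℂ)) s)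
    (hGZ : ∀ s : ℂ, σ < s.re → G s = LSeries (fun n => (a n : ℂ)) s)
    (hG : ContinuousOn G ({s | σ ≤ s.re} \ {(σ : ℂ)})) (hH : AnalyticAt ℂ H (σ : ℂ))
    (hpole : ∀ᶠ s in 𝓝[{s | σ ≤ s.re} \ {(σ : ℂ)}] (σ : ℂ), (s - σ) ^ (m + 1) * G s = H s) :
    ∃ (c : ℕ → ℂ) (h : ℂ → ℂ), c m = H σ / σ ∧ ContinuousOn h {z | 0 ≤ z.re} ∧
      ∀ z : ℂ, 0 < z.re →
        laplace (fun u => (scaledSum a σ u : ℂ)) z = polarPart c (m + 1) z + h z := by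
  have hH_div : AnalyticAt ℂ (fun z => H (σ + z) / (σ + z)) 0 :=
    (AnalyticAt.fun_comp (by simpa using hH) (by fun_prop)).div (by fun_prop)
      (ofReal_add_ne_zero hσ le_rfl)
  have hpole_div : ∀ᶠ z in 𝓝[{z : ℂ | 0 ≤ z.re} \ {0}] 0,
      z ^ (m + 1) * (G (σ + z) / (σ + z)) = H (σ + z) / (σ + z) := by
    filter_upwards [(tendsto_const_add_nhdsWithin_diff_singleton σ).eventually hpole] with z hz
    rw [← hz, add_sub_cancel_left, mul_div_assoc]
  have hG_div : ContinuousOn (fun z => G (σ + z) / (σ + z)) ({z | 0 ≤ z.re} \ {0}) :=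
    (hG.comp (by fun_prop) fun z hz => by simpa using hz).div (by fun_prop)
      fun z hz => ofReal_add_ne_zero hσ hz.1
  obtain ⟨c, h, hcm, hh, hsplit⟩ := exists_polarPart_add_continuousOn hH_div hpole_div hG_div
  refine ⟨c, h, by simpa using hcm, hh, fun z hz => ?_⟩
  rw [laplace_scaledSum ha hσ hconv hz, ← hGZ _ (by simpa using hz),
    hsplit z (Complex.ne_zero_of_re_pos hz)]

theorem tendsto_scaledSum_div_pow (ha : ∀ n, 0 ≤ a n) (hσ : 0 < σ)
    (hconv : ∀ s : ℂ, σ < s.re → LSeriesSummable (fun n => (a n : ℂ)) s)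
    (hGZ : ∀ s : ℂ, σ < s.re → G s = LSeries (fun n => (a n : ℂ)) s)
    (hG : ContinuousOn G ({s | σ ≤ s.re} \ {(σ : ℂ)})) (hH : AnalyticAt ℂ H (σ : ℂ))
    (hpole : ∀ᶠ s in 𝓝[{s | σ ≤ s.re} \ {(σ : ℂ)}] (σ : ℂ), (s - σ) ^ (m + 1) * G s = H s)
    {A : ℝ} (hHA : H σ = A) :
    Tendsto (fun u => scaledSum a σ u / u ^ m) atTop (𝓝 (A / (σ * m.factorial))) := by
  obtain ⟨c, h, hcm, hh, hlap⟩ :=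
    exists_laplace_scaledSum_eq_polarPart_add ha hσ hconv hGZ hG hH hpole
  have hlead : c m / m.factorial = ((A / (σ * m.factorial) : ℝ) : ℂ) := by
    rw [hcm, hHA, div_div]
    push_cast
    rfl
  refine (isExpMonotone_scaledSum ha σ).tendsto_div_pow_of_laplace hσ.le
    (fun ε hε => integrable_damp_scaledSum ha hσ.le hconv hε)
    (measurable_polarDensity c (m + 1)).aestronglyMeasurable
    (fun u hu => polarDensity_of_neg c (m + 1) hu) (norm_polarDensity_le c m)
    (hlead ▸ tendsto_inv_pow_smul_polarDensity c m) hh fun z hz => ?_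
  rw [hlap z hz, laplace_polarDensity c _ hz]

lemma tendsto_sum_Icc_div_of_scaledSum {L : ℝ}
    (hL : Tendsto (fun u => scaledSum a σ u / u ^ m) atTop (𝓝 L)) :
    Tendsto (fun N : ℕ => (∑ n ∈ Finset.Icc 1 N, a n) / ((N : ℝ) ^ σ * log N ^ m)) atTop
      (𝓝 L) := by
  refine (hL.comp (tendsto_log_atTop.comp tendsto_natCast_atTop_atTop)).congr' ?_
  filter_upwards [eventually_gt_atTop 0] with N hN
  have hN_pos : (0 : ℝ) < N := by exact_mod_cast hN
  rw [Function.comp_apply, Function.comp_apply, scaledSum, exp_log hN_pos, Nat.floor_natCast,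
    mul_comm (-σ), exp_mul, exp_log hN_pos, rpow_neg hN_pos.le, inv_mul_eq_div, div_div]

lemma continuousOn_of_eq_LSeries
    (hconv : ∀ s : ℂ, σ < s.re → LSeriesSummable (fun n => (a n : ℂ)) s)
    (hGZ : ∀ s : ℂ, σ < s.re → G s = LSeries (fun n => (a n : ℂ)) s)
    (hhol : ∀ s : ℂ, s.re = σ → s ≠ (σ : ℂ) → AnalyticAt ℂ G s) :
    ContinuousOn G ({s | σ ≤ s.re} \ {(σ : ℂ)}) := by
  rintro s ⟨hs : σ ≤ s.re, hsσ⟩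
  apply ContinuousAt.continuousWithinAt
  rcases hs.eq_or_lt with hs_eq | hs_lt
  · exact (hhol s hs_eq.symm hsσ).continuousAt
  · have habscissa : LSeries.abscissaOfAbsConv (fun n => (a n : ℂ)) ≤ σ :=
      LSeries.abscissaOfAbsConv_le_of_forall_lt_LSeriesSummable fun y hy =>
        hconv y (by simpa using hy)
    refine (LSeries_hasDerivAt
      (habscissa.trans_lt (by exact_mod_cast hs_lt))).continuousAt.congr ?_
    filter_upwards [(isOpen_lt continuous_const Complex.continuous_re).mem_nhds hs_lt] with t ht
    exact (hGZ t ht).symm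

theorem tauberian_delange_general (ha : ∀ n, 0 ≤ a n) (hσ : 0 < σ) {w : ℕ} (hw : 1 ≤ w)
    (hconv : ∀ s : ℂ, σ < s.re → LSeriesSummable (fun n => (a n : ℂ)) s)
    (hGZ : ∀ s : ℂ, σ < s.re → G s = LSeries (fun n => (a n : ℂ)) s)
    (hG : ContinuousOn G ({s | σ ≤ s.re} \ {(σ : ℂ)}))
    (hH : AnalyticAt ℂ H (σ : ℂ)) (hH0 : H (σ : ℂ) ≠ 0)
    (hpole : ∀ᶠ s in 𝓝[{s | σ ≤ s.re} \ {(σ : ℂ)}] (σ : ℂ), (s - (σ : ℂ)) ^ w * G s = H s)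
    {A : ℝ}
    (hA : Tendsto (fun s : ℝ => ((s : ℂ) - (σ : ℂ)) ^ w * LSeries (fun n => (a n : ℂ)) s)
      (𝓝[>] σ) (𝓝 (A : ℂ))) :
    Tendsto (fun N : ℕ => (∑ n ∈ Finset.Icc 1 N, a n) /
      (A / (σ * (Nat.factorial (w - 1))) * (N : ℝ) ^ σ * (Real.log N) ^ (w - 1)))
      atTop (𝓝 1) := by
  obtain ⟨m, rfl⟩ := Nat.exists_eq_add_of_le' hw
  have hHA : H σ = A := by
    have hreal := tendsto_ofReal_nhdsWithin_diff_singleton σ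
    refine tendsto_nhds_unique ((hH.continuousAt.tendsto.mono_left nhdsWithin_le_nhds).comp
      hreal) (hA.congr' ?_)
    filter_upwards [hreal.eventually hpole, self_mem_nhdsWithin] with s hs hs_gt
    rw [← hGZ s (by simpa using hs_gt), hs, Function.comp_apply]
  have hA0 : A ≠ 0 := fun h => hH0 (by rw [hHA, h, Complex.ofReal_zero])
  have hL : A / (σ * m.factorial) ≠ 0 := by positivity
  have hlim := (tendsto_sum_Icc_div_of_scaledSum
    (tendsto_scaledSum_div_pow ha hσ hconv hGZ hG hH hpole hHA)).div_const (A / (σ * m.factorial))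
  rw [div_self hL] at hlim
  refine hlim.congr fun N => ?_
  rw [Nat.add_sub_cancel, div_div]
  ring_nf

end Delange

end

/-- Delange's Tauberian theorem (Theorem 1.1): if the Dirichlet series
`Z(s) = ∑ aₙ n⁻ˢ` with nonnegative coefficients has abscissa of convergence `σ > 0`
and extends meromorphically to a neighborhood of the closed half-plane `Re s ≥ σ`,
holomorphically at every point of the line `Re s = σ` except for a pole of order `w`
at `s = σ`, then `∑_{n ≤ N} aₙ ∼ (A/(σ·(w-1)!))·N^σ·(log N)^{w-1}`. -/
theorem tauberian_delange
    (a : ℕ → ℝ) (ha : ∀ n, 0 ≤ a n) (σ : ℝ) (hσ : 0 < σ) (w : ℕ) (hw : 1 ≤ w)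
    (hconv : ∀ s : ℂ, σ < s.re → LSeriesSummable (fun n => (a n : ℂ)) s)
    (hdiv : ∀ s : ℂ, s.re < σ → ¬ LSeriesSummable (fun n => (a n : ℂ)) s)
    (U : Set ℂ) (hUopen : IsOpen U) (hU : {s : ℂ | σ ≤ s.re} ⊆ U)
    (G : ℂ → ℂ) (hG : MeromorphicOn G U)
    (hGZ : ∀ s : ℂ, σ < s.re → G s = LSeries (fun n => (a n : ℂ)) s)
    (hhol : ∀ s : ℂ, s.re = σ → s ≠ (σ : ℂ) → AnalyticAt ℂ G s)
    (H : ℂ → ℂ) (hH : AnalyticAt ℂ H (σ : ℂ)) (hH0 : H (σ : ℂ) ≠ 0)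
    (hpole : ∀ᶠ s in 𝓝[≠] (σ : ℂ), (s - (σ : ℂ)) ^ w * G s = H s)
    (A : ℝ)
    (hA : Tendsto (fun s : ℝ => ((s : ℂ) - (σ : ℂ)) ^ w * LSeries (fun n => (a n : ℂ)) s)
      (𝓝[>] σ) (𝓝 (A : ℂ))) :
    Tendsto (fun N : ℕ => (∑ n ∈ Finset.Icc 1 N, a n) /
      (A / (σ * (Nat.factorial (w - 1))) * (N : ℝ) ^ σ * (Real.log N) ^ (w - 1)))
      atTop (𝓝 1) := by
  exact tauberian_delange_general ha hσ hw hconv hGZ (continuousOn_of_eq_LSeries hconv hGZ hhol)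
    hH hH0 (hpole.filter_mono (nhdsWithin_mono _ fun _ hs => hs.2)) hA
end

section
/- Let K be a number field with ring of integers O_K. For every positive integer n, the number of ideals I of the polynomial ring O_K[X] with |O_K[X]/I| = n equals n times the number of finitely supported sequences (I_d)_{d≥1} of nonzero ideals of O_K (meaning I_d = O_K for all but finitely many d) such that ∏_{d≥1} N(I_d)^d = n, where N(I_d) = |O_K/I_d| is the absolute norm of the ideal I_d. -/
open NumberField

/-!
Let `A` be an infinite Dedekind domain and `L k` the ideal of coefficients of `X ^ k` in elements
of `I` of degree at most `k`. If `I` has finite index, these ideals are nonzero, increase with `k`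
and are eventually `⊤`, so that `L k = f k * f (k + 1) * ⋯` for a unique finitely supported sequence
of nonzero ideals `f`. The factor `f k` plays the role of `I_{k+1}`.

If the last nontrivial factor is `J = f m`, then `I` contains a monic polynomial of degree `m + 1`,
and all elements of `I` of degree at most `m` have their coefficients in `J`. Hence there is a
unique ideal `B` containing `I` with the factors `f 0, …, f (m - 1)` and `I_{≤ m} = J • B_{≤ m}`.
Conversely, given `B` and `J`, the ideal `I` amounts to a monic polynomial of degree `m + 1` in `B`,
taken modulo `J • B_{≤ m}`. So the number of choices for `I` is the index
`[B_{≤ m} : J • B_{≤ m}] = N(J) ^ (m + 1)`, which is also the index of `I` in `B`. By induction, the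
number of ideals with factors `f` is equal to their common index `∏ N(f k) ^ (k + 1)`.
-/

open Polynomial

namespace PolynomialIdeal

theorem span_singleton_smul_le_span_singleton_smul_iff {A V : Type*} [CommRing A] [IsDomain A]
    [AddCommGroup V] [Module A V] [Module.IsTorsionFree A V] {d : A} (hd : d ≠ 0)
    {M N : Submodule A V} : Ideal.span {d} • M ≤ Ideal.span {d} • N ↔ M ≤ N := by
  rw [Submodule.ideal_span_singleton_smul, Submodule.ideal_span_singleton_smul]
  exact Submodule.map_le_map_iff_of_injective (smul_right_injective V hd) M N

theorem exists_mul_eq_span_singleton {A : Type*} [CommRing A] [IsDedekindDomain A] {J : Ideal A}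
    (hJ : J ≠ ⊥) : ∃ (J' : Ideal A) (d : A), d ≠ 0 ∧ J * J' = Ideal.span {d} := by
  obtain ⟨d, hdJ, hd⟩ := Submodule.exists_mem_ne_zero_of_ne_bot hJ
  obtain ⟨J', hJ'⟩ := Ideal.dvd_span_singleton.2 hdJ
  exact ⟨J', d, hd, hJ'.symm⟩

section DedekindModule

variable {A V : Type*} [CommRing A] [IsDedekindDomain A] [AddCommGroup V] [Module A V]
  [Module.IsTorsionFree A V] {J : Ideal A}

theorem smul_le_smul_iff_of_ne_bot (hJ : J ≠ ⊥) {M N : Submodule A V} :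
    J • M ≤ J • N ↔ M ≤ N := by
  refine ⟨fun h => ?_, fun h => Submodule.smul_mono le_rfl h⟩
  obtain ⟨J', d, hd, hJJ'⟩ := exists_mul_eq_span_singleton hJ
  rw [← span_singleton_smul_le_span_singleton_smul_iff hd, ← hJJ', mul_comm J,
    Submodule.mul_smul, Submodule.mul_smul]
  exact Submodule.smul_mono le_rfl h

theorem smul_right_inj_of_ne_bot (hJ : J ≠ ⊥) {M N : Submodule A V} : J • M = J • N ↔ M = N := by
  simp only [le_antisymm_iff, smul_le_smul_iff_of_ne_bot hJ]

theorem exists_smul_eq_of_le_smul (hJ : J ≠ ⊥) {M N : Submodule A V} (h : N ≤ J • M) :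
    ∃ M' ≤ M, J • M' = N := by
  obtain ⟨J', d, hd, hJJ'⟩ := exists_mul_eq_span_singleton hJ
  have hJ'N : J' • N ≤ Ideal.span {d} • M := by
    rw [← hJJ', mul_comm, Submodule.mul_smul]
    exact Submodule.smul_mono le_rfl h
  -- `M'` is `d⁻¹ • J' • N`, and `d⁻¹ • J'` is the inverse of `J`.
  obtain ⟨M', hM'⟩ : ∃ M' : Submodule A V, Ideal.span {d} • M' = J' • N := by
    refine ⟨(J' • N).comap (LinearMap.lsmul A V d), ?_⟩
    rw [Submodule.ideal_span_singleton_smul] at hJ'N ⊢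
    exact Submodule.map_comap_eq_of_le (hJ'N.trans LinearMap.map_le_range)
  refine ⟨M', ?_, ?_⟩
  · rwa [← span_singleton_smul_le_span_singleton_smul_iff hd, hM']
  · have hspan : Ideal.span {d} • J • M' = Ideal.span {d} • N := by
      rw [← Submodule.mul_smul, mul_comm, Submodule.mul_smul, hM', ← Submodule.mul_smul, hJJ']
    exact (smul_right_inj_of_ne_bot (by simpa using hd)).1 hspan

theorem smul_inf_eq_smul_inf (hJ : J ≠ ⊥) (M W : Submodule A V)
    (hW : ∀ a : A, a ≠ 0 → ∀ v : V, a • v ∈ W → v ∈ W) : J • (M ⊓ W) = J • M ⊓ W := by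
  refine le_antisymm (le_inf (Submodule.smul_mono le_rfl inf_le_left)
    (Submodule.smul_le_right.trans inf_le_right)) ?_
  obtain ⟨M', hM'M, hM'⟩ := exists_smul_eq_of_le_smul hJ (inf_le_left : J • M ⊓ W ≤ J • M)
  obtain ⟨a, haJ, ha⟩ := Submodule.exists_mem_ne_zero_of_ne_bot hJ
  have hM'W : M' ≤ W := fun v hv => hW a ha v
    (hM'.le.trans inf_le_right (Submodule.smul_mem_smul haJ hv))
  exact hM'.ge.trans (Submodule.smul_mono le_rfl (le_inf hM'M hM'W))

end DedekindModule

section IndexAndCard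

theorem relIndex_eq_relIndex_map_mul_relIndex_inf_ker {G G' : Type*} [AddCommGroup G]
    [AddCommGroup G'] (φ : G →+ G') {H K : AddSubgroup G} (h : H ≤ K) :
    H.relIndex K = (H.map φ).relIndex (K.map φ) * (H ⊓ φ.ker).relIndex (K ⊓ φ.ker) := by
  have hsup : H.relIndex (H ⊔ K ⊓ φ.ker) = (H ⊓ φ.ker).relIndex (K ⊓ φ.ker) := by
    rw [AddSubgroup.relIndex_sup_left, ← AddSubgroup.inf_relIndex_right, ← inf_assoc,
      inf_eq_left.2 h]
  have hmap : (H ⊔ K ⊓ φ.ker).relIndex K = (H.map φ).relIndex (K.map φ) := by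
    rw [← AddSubgroup.relIndex_comap, AddSubgroup.comap_map_eq,
      ← AddSubgroup.inf_relIndex_right (H ⊔ φ.ker), sup_inf_assoc_of_le _ h, inf_comm]
  rw [← hsup, ← hmap, mul_comm,
    AddSubgroup.relIndex_mul_relIndex _ _ _ le_sup_left (sup_le h inf_le_left)]

theorem relIndex_mul_self {A : Type*} [CommRing A] [IsDedekindDomain A] {J L : Ideal A}
    (hJ : J ≠ ⊥) (hL : L ≠ ⊥) :
    (J * L).toAddSubgroup.relIndex L.toAddSubgroup = Nat.card (A ⧸ J) := by
  obtain ⟨x, hx⟩ := IsDedekindDomain.exists_sup_span_eq (Ideal.mul_le_right : J * L ≤ L)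
    (mul_ne_zero hJ hL)
  have hcomap : (J * L).toAddSubgroup.comap (AddMonoidHom.mulRight x) = J.toAddSubgroup := by
    ext a
    change a * x ∈ J * L ↔ a ∈ J
    have hxL : x ∈ L := hx.le (Ideal.mem_sup_right (Ideal.mem_span_singleton_self x))
    refine ⟨fun h => ?_, fun ha => Ideal.mul_mem_mul ha hxL⟩
    have haL : Ideal.span {a} * L ≤ J * L := by
      rw [← hx, Ideal.mul_sup, Ideal.span_singleton_mul_span_singleton, sup_le_iff]
      exact ⟨hx.symm ▸ Ideal.mul_le_right, (Ideal.span_singleton_le_iff_mem _).2 (hx.symm ▸ h)⟩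
    rwa [← Ideal.dvd_iff_le, mul_dvd_mul_iff_right hL, Ideal.dvd_iff_le,
      Ideal.span_singleton_le_iff_mem] at haL
  have hrange : (AddMonoidHom.mulRight x).range = (Ideal.span {x}).toAddSubgroup := by
    ext a
    exact Ideal.mem_span_singleton'.symm
  have hL' : L.toAddSubgroup = (J * L).toAddSubgroup ⊔ (Ideal.span {x}).toAddSubgroup := by
    rw [← Submodule.sup_toAddSubgroup, hx]
  rw [hL', AddSubgroup.relIndex_sup_left, ← hrange, ← AddSubgroup.index_comap, hcomap]
  rfl

theorem card_eq_index_of_surjective {G β : Type*} [AddGroup G] {H : AddSubgroup G} {φ : G → β}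
    (hφ : Function.Surjective φ) (h : ∀ x y, φ x = φ y ↔ -x + y ∈ H) : Nat.card β = H.index :=
  Nat.card_congr <| (Setoid.quotientKerEquivOfSurjective φ hφ).symm.trans <|
    Quotient.congrRight fun x y => (h x y).trans QuotientAddGroup.leftRel_apply.symm

theorem card_eq_mul_card_of_fibers {α β : Type*} {R : β → α → Prop} (hR : ∀ a, ∃! b, R b a)
    {n : ℕ} (hn : n ≠ 0) (hcard : ∀ b, Nat.card {a // R b a} = n) :
    Nat.card α = n * Nat.card β := by
  choose φ hφ hφ' using hR
  have fiberEquiv (b : β) : {a // φ a = b} ≃ Fin n :=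
    have : Finite {a // R b a} := Nat.finite_of_card_ne_zero (hcard b ▸ hn)
    (Equiv.subtypeEquivRight fun a =>
      ⟨fun h => h ▸ hφ a, fun h => (hφ' a b h).symm⟩).trans (Finite.equivFinOfCardEq (hcard b))
  rw [Nat.card_congr ((Equiv.sigmaFiberEquiv φ).symm.trans
    ((Equiv.sigmaCongrRight fiberEquiv).trans (Equiv.sigmaEquivProd β (Fin n)))), Nat.card_prod,
    Nat.card_fin, mul_comm]

end IndexAndCard

noncomputable section Truncation

variable {A : Type*} [CommRing A] {I I' : Ideal A[X]} {p f : A[X]} {m n : ℕ}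

/-- The `A`-module `I_{< n}` of elements of `I` of degree less than `n`; it is the part of `I` that
is not determined by a monic polynomial of degree `n` in `I`. -/
def degreeLTPart (I : Ideal A[X]) (n : ℕ) : Submodule A A[X] :=
  I.restrictScalars A ⊓ degreeLT A n

theorem mem_degreeLTPart : f ∈ degreeLTPart I n ↔ f ∈ I ∧ f ∈ degreeLT A n := Iff.rfl

theorem degreeLTPart_inf_degreeLT (I : Ideal A[X]) (h : m ≤ n) :
    degreeLTPart I n ⊓ degreeLT A m = degreeLTPart I m := by
  rw [degreeLTPart, inf_assoc, inf_eq_right.2 (degreeLT_mono h), degreeLTPart]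

theorem degreeLTPart_succ_inf_ker_lcoeff (I : Ideal A[X]) (n : ℕ) :
    degreeLTPart I (n + 1) ⊓ LinearMap.ker (lcoeff A n) = degreeLTPart I n := by
  rw [degreeLTPart, inf_assoc, degreeLTPart]
  congr 1
  ext f
  simp only [Submodule.mem_inf, mem_degreeLT, LinearMap.mem_ker, lcoeff_apply,
    degree_lt_iff_coeff_zero]
  grind

theorem map_lcoeff_degreeLTPart_succ (I : Ideal A[X]) (n : ℕ) :
    (degreeLTPart I (n + 1)).map (lcoeff A n) = I.leadingCoeffNth n := by
  rw [degreeLTPart, degreeLT_succ_eq_degreeLE, inf_comm]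
  rfl

theorem coeff_mem_leadingCoeffNth (hf : f ∈ degreeLTPart I (n + 1)) :
    f.coeff n ∈ I.leadingCoeffNth n := by
  rw [← map_lcoeff_degreeLTPart_succ]
  exact Submodule.mem_map_of_mem hf

theorem mem_leadingCoeffNth_iff_exists_coeff_eq {a : A} :
    a ∈ I.leadingCoeffNth n ↔ ∃ p ∈ I, p.natDegree ≤ n ∧ p.coeff n = a := by
  simp only [← map_lcoeff_degreeLTPart_succ, Submodule.mem_map, mem_degreeLTPart, lcoeff_apply,
    and_assoc, degreeLT_succ_eq_degreeLE, mem_degreeLE, ← natDegree_le_iff_degree_le]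

theorem leadingCoeffNth_eq_top_iff [Nontrivial A] :
    I.leadingCoeffNth n = ⊤ ↔ ∃ p ∈ I, p.Monic ∧ p.natDegree = n := by
  rw [Ideal.eq_top_iff_one, mem_leadingCoeffNth_iff_exists_coeff_eq]
  refine exists_congr fun p => and_congr_right fun _ => ⟨fun ⟨hdeg, hcoeff⟩ => ?_, ?_⟩
  · exact ⟨monic_of_natDegree_le_of_coeff_eq_one n hdeg hcoeff,
      natDegree_eq_of_le_of_coeff_ne_zero hdeg (hcoeff ▸ one_ne_zero)⟩
  · rintro ⟨hp, rfl⟩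
    exact ⟨le_rfl, hp⟩

theorem X_mul_sub_C_coeff_mul_mem_degreeLTPart (hp : p.Monic) (hpI : p ∈ I)
    (hdeg : p.natDegree = m + 1) (hf : f ∈ degreeLTPart I (m + 1)) :
    X * f - C (f.coeff m) * p ∈ degreeLTPart I (m + 1) := by
  have hpm : p.coeff (m + 1) = 1 := hdeg ▸ hp
  have hf0 := (degree_lt_iff_coeff_zero _ _).1 (mem_degreeLT.1 hf.2)
  rw [mem_degreeLTPart, mem_degreeLT, degree_lt_iff_coeff_zero]
  refine ⟨I.sub_mem (I.mul_mem_left _ hf.1) (I.mul_mem_left _ hpI), ?_⟩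
  rintro (_ | j) hj
  · omega
  rw [coeff_sub, coeff_X_mul, coeff_C_mul]
  rcases Nat.eq_or_lt_of_le (Nat.succ_le_succ_iff.1 hj) with rfl | hlt
  · rw [hpm, mul_one, sub_self]
  · rw [hf0 j hlt, coeff_eq_zero_of_natDegree_lt (by omega : p.natDegree < j + 1), mul_zero,
      sub_zero]

theorem coeff_mem_leadingCoeffNth_of_monic (hp : p.Monic) (hpI : p ∈ I)
    (hdeg : p.natDegree = m + 1) (hf : f ∈ degreeLTPart I (m + 1)) (k : ℕ) :
    f.coeff k ∈ I.leadingCoeffNth m := by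
  rcases Nat.lt_or_ge m k with hk | hk
  · rw [(degree_lt_iff_coeff_zero _ _).1 (mem_degreeLT.1 hf.2) k hk]
    exact zero_mem _
  -- `X * f - C (f.coeff m) * p` has the coefficients of `f` shifted up by one, modulo `f.coeff m`.
  induction hk using Nat.decreasingInduction generalizing f with
  | self => exact coeff_mem_leadingCoeffNth hf
  | of_succ k _ ih =>
    have hshift := ih (X_mul_sub_C_coeff_mul_mem_degreeLTPart hp hpI hdeg hf)
    rw [coeff_sub, coeff_X_mul, coeff_C_mul] at hshift
    exact (Submodule.sub_mem_iff_left _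
      (Ideal.mul_mem_right _ _ (coeff_mem_leadingCoeffNth hf))).1 hshift

theorem mem_smul_degreeLT_of_coeff_mem {J : Ideal A} (hf : f ∈ degreeLT A n)
    (hcoeff : ∀ k, f.coeff k ∈ J) : f ∈ J • degreeLT A n := by
  rw [f.as_sum_support_C_mul_X_pow]
  refine Submodule.sum_mem _ fun k hk => ?_
  rw [← smul_eq_C_mul]
  refine Submodule.smul_mem_smul (hcoeff k) (mem_degreeLT.2 ?_)
  exact (degree_X_pow_le k).trans_lt
    ((le_degree_of_mem_supp k hk).trans_lt (mem_degreeLT.1 hf))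

theorem degreeLTPart_le_leadingCoeffNth_smul (hp : p.Monic) (hpI : p ∈ I)
    (hdeg : p.natDegree = m + 1) :
    degreeLTPart I (m + 1) ≤ I.leadingCoeffNth m • degreeLT A (m + 1) := fun _ hf =>
  mem_smul_degreeLT_of_coeff_mem hf.2 (coeff_mem_leadingCoeffNth_of_monic hp hpI hdeg hf)

section Nontrivial
variable [Nontrivial A]

theorem modByMonic_mem_degreeLTPart (hp : p.Monic) (hpI : p ∈ I) (hf : f ∈ I) :
    f %ₘ p ∈ degreeLTPart I p.natDegree := by
  refine ⟨?_, mem_degreeLT.2 (degree_eq_natDegree hp.ne_zero ▸ degree_modByMonic_lt f hp)⟩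
  rw [modByMonic_eq_sub_mul_div]
  exact I.sub_mem hf (I.mul_mem_right _ hpI)

theorem sub_mem_degreeLTPart {q : A[X]} (hp : p.Monic) (hpI : p ∈ I) (hq : q.Monic) (hqI : q ∈ I)
    (hpq : q.natDegree = p.natDegree) : q - p ∈ degreeLTPart I p.natDegree := by
  have hdeg : q.degree = p.degree := by
    rw [degree_eq_natDegree hp.ne_zero, degree_eq_natDegree hq.ne_zero, hpq]
  refine ⟨I.sub_mem hqI hpI, mem_degreeLT.2 ?_⟩
  rw [← hpq, ← degree_eq_natDegree hq.ne_zero]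
  exact degree_sub_lt_left hdeg hq.ne_zero (hq.leadingCoeff.trans hp.leadingCoeff.symm)

theorem le_of_degreeLTPart_le (hp : p.Monic) (hpI : p ∈ I) (hpI' : p ∈ I')
    (h : degreeLTPart I p.natDegree ≤ degreeLTPart I' p.natDegree) : I ≤ I' := fun f hf => by
  rw [← modByMonic_add_div f p]
  exact I'.add_mem (h (modByMonic_mem_degreeLTPart hp hpI hf)).1 (I'.mul_mem_right _ hpI')

end Nontrivial
end Truncation

section TruncationIndex

variable {A : Type*} [CommRing A] [IsDedekindDomain A] {J : Ideal A} {m n : ℕ}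

theorem smul_degreeLTPart_inf_degreeLT (hJ : J ≠ ⊥) (I : Ideal A[X]) (h : m ≤ n) :
    J • degreeLTPart I n ⊓ degreeLT A m = J • degreeLTPart I m := by
  rw [← degreeLTPart_inf_degreeLT I h, smul_inf_eq_smul_inf hJ]
  intro a ha f hf
  rwa [mem_degreeLT, degree_smul_of_smul_regular f (IsSMulRegular.of_ne_zero ha),
    ← mem_degreeLT] at hf

theorem relIndex_smul_degreeLTPart (hJ : J ≠ ⊥) (I : Ideal A[X])
    (hI : ∀ k < n, I.leadingCoeffNth k ≠ ⊥) :
    (J • degreeLTPart I n).toAddSubgroup.relIndex (degreeLTPart I n).toAddSubgroup =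
      Nat.card (A ⧸ J) ^ n := by
  induction n with
  | zero =>
    have hzero : degreeLTPart I 0 = ⊥ := by
      ext f
      simp +contextual [mem_degreeLTPart, mem_degreeLT]
    simp [hzero]
  | succ n ih =>
    have hker : J • degreeLTPart I (n + 1) ⊓ LinearMap.ker (lcoeff A n) = J • degreeLTPart I n := by
      rw [← degreeLTPart_succ_inf_ker_lcoeff I n, smul_inf_eq_smul_inf hJ]
      intro a ha f hf
      simpa [ha] using hf
    have hmap : (J • degreeLTPart I (n + 1)).map (lcoeff A n) = J * I.leadingCoeffNth n := by
      rw [Submodule.map_smul'', map_lcoeff_degreeLTPart_succ, smul_eq_mul]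
    calc (J • degreeLTPart I (n + 1)).toAddSubgroup.relIndex
          (degreeLTPart I (n + 1)).toAddSubgroup
      _ = ((J • degreeLTPart I (n + 1)).map (lcoeff A n)).toAddSubgroup.relIndex
            ((degreeLTPart I (n + 1)).map (lcoeff A n)).toAddSubgroup *
          (J • degreeLTPart I (n + 1) ⊓ LinearMap.ker (lcoeff A n)).toAddSubgroup.relIndex
            (degreeLTPart I (n + 1) ⊓ LinearMap.ker (lcoeff A n)).toAddSubgroup :=
        relIndex_eq_relIndex_map_mul_relIndex_inf_ker (lcoeff A n).toAddMonoidHom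
          Submodule.smul_le_right
      _ = Nat.card (A ⧸ J) ^ (n + 1) := by
        rw [hmap, map_lcoeff_degreeLTPart_succ, relIndex_mul_self hJ (hI n n.lt_succ_self), hker,
          degreeLTPart_succ_inf_ker_lcoeff, ih fun k hk => hI k (hk.trans n.lt_succ_self),
          pow_succ']

end TruncationIndex

noncomputable section Refinement

variable {A : Type*} [CommRing A] {J : Ideal A} {I B B' : Ideal A[X]} {p q : A[X]} {k m n : ℕ}

/-- `I` is obtained from `B` by scaling the part of degree less than `n` by `J` while keeping a
monic polynomial of degree `n`. This is one step of the tower of ideals leading from `⊤` to an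
ideal of finite index. -/
structure IsRefinement (n : ℕ) (J : Ideal A) (B I : Ideal A[X]) : Prop where
  le : I ≤ B
  leadingCoeffNth_eq_top : I.leadingCoeffNth n = ⊤
  degreeLTPart_eq : degreeLTPart I n = J • degreeLTPart B n

theorem IsRefinement.le_of_isRefinement [IsDedekindDomain A] (hJ : J ≠ ⊥)
    (h : IsRefinement n J B I) (h' : IsRefinement n J B' I) : B ≤ B' := by
  obtain ⟨p, hpI, hp, rfl⟩ := leadingCoeffNth_eq_top_iff.1 h.leadingCoeffNth_eq_top
  refine le_of_degreeLTPart_le hp (h.le hpI) (h'.le hpI) ?_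
  rw [← smul_le_smul_iff_of_ne_bot hJ, ← h.degreeLTPart_eq, h'.degreeLTPart_eq]

theorem IsRefinement.leadingCoeffNth_eq_mul [IsDedekindDomain A] (hJ : J ≠ ⊥)
    (h : IsRefinement n J B I) (hk : k < n) :
    I.leadingCoeffNth k = J * B.leadingCoeffNth k := by
  have hpart : degreeLTPart I (k + 1) = J • degreeLTPart B (k + 1) := by
    rw [← degreeLTPart_inf_degreeLT I hk, h.degreeLTPart_eq, smul_degreeLTPart_inf_degreeLT hJ B hk]
  rw [← map_lcoeff_degreeLTPart_succ, hpart, Submodule.map_smul'', map_lcoeff_degreeLTPart_succ,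
    smul_eq_mul]

theorem exists_isRefinement [IsDedekindDomain A] (hI : I.leadingCoeffNth (m + 1) = ⊤)
    (hJ : I.leadingCoeffNth m ≠ ⊥) :
    ∃ B, IsRefinement (m + 1) (I.leadingCoeffNth m) B I ∧ B.leadingCoeffNth m = ⊤ := by
  set J := I.leadingCoeffNth m
  obtain ⟨p, hpI, hp, hdeg⟩ := leadingCoeffNth_eq_top_iff.1 hI
  obtain ⟨M, hM, hJM⟩ := exists_smul_eq_of_le_smul hJ
    (degreeLTPart_le_leadingCoeffNth_smul hp hpI hdeg)
  let B : Ideal A[X] := I.colon (C '' J)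
  have mem_B {f : A[X]} : f ∈ B ↔ ∀ a ∈ J, a • f ∈ I := by
    simp only [B, Submodule.mem_colon, Set.forall_mem_image, SetLike.mem_coe, smul_eq_mul,
      smul_eq_C_mul, mul_comm f]
  have hMB : M ≤ degreeLTPart B (m + 1) := fun f hf =>
    ⟨mem_B.2 fun a ha => (hJM.le (Submodule.smul_mem_smul ha hf)).1, hM hf⟩
  have h : IsRefinement (m + 1) J B I :=
    { le := fun f hf => mem_B.2 fun a _ => I.smul_of_tower_mem a hf
      leadingCoeffNth_eq_top := hI
      degreeLTPart_eq := le_antisymm (hJM.ge.trans (Submodule.smul_mono le_rfl hMB)) <|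
        Submodule.smul_le.2 fun a ha f hf => ⟨mem_B.1 hf.1 a ha, Submodule.smul_mem _ a hf.2⟩ }
  refine ⟨B, h, (smul_right_inj_of_ne_bot hJ).1 ?_⟩
  rw [smul_eq_mul, ← h.leadingCoeffNth_eq_mul hJ m.lt_succ_self, smul_eq_mul, Ideal.mul_top]

theorem IsRefinement.card_quotient_eq [Nontrivial A] (h : IsRefinement n J B I) :
    Nat.card (A[X] ⧸ I) =
      (J • degreeLTPart B n).toAddSubgroup.relIndex (degreeLTPart B n).toAddSubgroup *
        Nat.card (A[X] ⧸ B) := by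
  obtain ⟨p, hpI, hp, rfl⟩ := leadingCoeffNth_eq_top_iff.1 h.leadingCoeffNth_eq_top
  have hB : B.toAddSubgroup = I.toAddSubgroup ⊔ (degreeLTPart B p.natDegree).toAddSubgroup := by
    refine le_antisymm (fun f hf => ?_) (sup_le h.le fun f hf => hf.1)
    rw [← modByMonic_add_div f p, add_comm]
    exact AddSubgroup.add_mem_sup (I.mul_mem_right _ hpI)
      (modByMonic_mem_degreeLTPart hp (h.le hpI) hf)
  have hinf : I.toAddSubgroup ⊓ (degreeLTPart B p.natDegree).toAddSubgroup =
      (degreeLTPart I p.natDegree).toAddSubgroup := by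
    ext f
    exact ⟨fun hf => ⟨hf.1, hf.2.2⟩, fun hf => ⟨hf.1, h.le hf.1, hf.2⟩⟩
  have hrel : I.toAddSubgroup.relIndex B.toAddSubgroup =
      (J • degreeLTPart B p.natDegree).toAddSubgroup.relIndex
        (degreeLTPart B p.natDegree).toAddSubgroup := by
    rw [← h.degreeLTPart_eq, ← hinf, AddSubgroup.inf_relIndex_right, hB,
      AddSubgroup.relIndex_sup_left]
  rw [← hrel]
  exact (AddSubgroup.relIndex_mul_index h.le).symm

/-- The refinement of `B` by `J` containing the monic polynomial `p ∈ B`, see `IsRefinement`; its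
degree parameter is `p.natDegree`. -/
def refinementOfMonic (J : Ideal A) (B : Ideal A[X]) (p : A[X]) : Ideal A[X] :=
  Ideal.span {p} ⊔ J.map C * B

theorem mem_refinementOfMonic_self : p ∈ refinementOfMonic J B p :=
  Ideal.mem_sup_left (Ideal.mem_span_singleton_self p)

theorem refinementOfMonic_le (hpB : p ∈ B) : refinementOfMonic J B p ≤ B :=
  sup_le ((Ideal.span_singleton_le_iff_mem B).2 hpB) Ideal.mul_le_right

section Nontrivial
variable [Nontrivial A]

theorem modByMonic_mem_smul_degreeLTPart {f : A[X]} (hp : p.Monic) (hpB : p ∈ B)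
    (hf : f ∈ refinementOfMonic J B p) : f %ₘ p ∈ J • degreeLTPart B p.natDegree := by
  obtain ⟨g, hg, h, hh, rfl⟩ := Submodule.mem_sup.1 hf
  have hg0 : g %ₘ p = 0 := (modByMonic_eq_zero_iff_dvd hp).2 (Ideal.mem_span_singleton.1 hg)
  rw [add_modByMonic, hg0, zero_add]
  have hh' : h ∈ J • B.restrictScalars A := by
    rwa [← Ideal.smul_restrictScalars]
  have hmap : (B.restrictScalars A).map (modByMonicHom p) ≤ degreeLTPart B p.natDegree :=
    Submodule.map_le_iff_le_comap.2 fun b hb => modByMonic_mem_degreeLTPart hp hpB hb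
  have hmem := Submodule.mem_map_of_mem (f := modByMonicHom p) hh'
  rw [Submodule.map_smul''] at hmem
  exact Submodule.smul_mono le_rfl hmap hmem

theorem degreeLTPart_refinementOfMonic (hp : p.Monic) (hpB : p ∈ B) :
    degreeLTPart (refinementOfMonic J B p) p.natDegree = J • degreeLTPart B p.natDegree := by
  refine le_antisymm (fun f hf => ?_) (Submodule.smul_le.2 fun a ha f hf => ⟨?_, ?_⟩)
  · have hmod := mem_degreeLT.1 hf.2
    rw [← degree_eq_natDegree hp.ne_zero, ← modByMonic_eq_self_iff hp] at hmod
    exact hmod ▸ modByMonic_mem_smul_degreeLTPart hp hpB hf.1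
  · refine Ideal.mem_sup_right ?_
    rw [smul_eq_C_mul]
    exact Ideal.mul_mem_mul (Ideal.mem_map_of_mem C ha) hf.1
  · exact Submodule.smul_mem _ a hf.2

theorem isRefinement_refinementOfMonic (hp : p.Monic) (hpB : p ∈ B) :
    IsRefinement p.natDegree J B (refinementOfMonic J B p) where
  le := refinementOfMonic_le hpB
  leadingCoeffNth_eq_top :=
    leadingCoeffNth_eq_top_iff.2 ⟨p, mem_refinementOfMonic_self, hp, rfl⟩
  degreeLTPart_eq := degreeLTPart_refinementOfMonic hp hpB

theorem IsRefinement.eq_refinementOfMonic (hp : p.Monic) (hpI : p ∈ I)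
    (h : IsRefinement p.natDegree J B I) : I = refinementOfMonic J B p := by
  have hpart : degreeLTPart I p.natDegree = degreeLTPart (refinementOfMonic J B p) p.natDegree := by
    rw [h.degreeLTPart_eq, degreeLTPart_refinementOfMonic hp (h.le hpI)]
  exact le_antisymm (le_of_degreeLTPart_le hp hpI mem_refinementOfMonic_self hpart.le)
    (le_of_degreeLTPart_le hp mem_refinementOfMonic_self hpI hpart.ge)

theorem refinementOfMonic_eq_iff (hp : p.Monic) (hpB : p ∈ B) (hq : q.Monic)
    (hpq : p.natDegree = q.natDegree) :
    refinementOfMonic J B p = refinementOfMonic J B q ↔ q - p ∈ J • degreeLTPart B p.natDegree := by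
  rw [← degreeLTPart_refinementOfMonic hp hpB]
  constructor
  · intro h
    exact sub_mem_degreeLTPart hp mem_refinementOfMonic_self hq (h ▸ mem_refinementOfMonic_self)
      hpq.symm
  · intro h
    have hqI : q ∈ refinementOfMonic J B p := by
      simpa using add_mem h.1 mem_refinementOfMonic_self
    exact (hpq ▸ isRefinement_refinementOfMonic hp hpB).eq_refinementOfMonic hq hqI

theorem card_isRefinement (hB : B.leadingCoeffNth n = ⊤) :
    Nat.card {I // IsRefinement n J B I} =
      (J • degreeLTPart B n).toAddSubgroup.relIndex (degreeLTPart B n).toAddSubgroup := by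
  obtain ⟨p, hpB, hp, rfl⟩ := leadingCoeffNth_eq_top_iff.1 hB
  have hdeg (r : degreeLTPart B p.natDegree) : r.1.degree < p.degree :=
    (mem_degreeLT.1 r.2.2).trans_eq (degree_eq_natDegree hp.ne_zero).symm
  have monic (r : degreeLTPart B p.natDegree) : (p + r.1).Monic := hp.add_of_left (hdeg r)
  have natDegree_eq (r : degreeLTPart B p.natDegree) : (p + r.1).natDegree = p.natDegree :=
    natDegree_add_eq_left_of_degree_lt (hdeg r)
  have mem (r : degreeLTPart B p.natDegree) : p + r.1 ∈ B := B.add_mem hpB r.2.1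
  have isRefinement (r : degreeLTPart B p.natDegree) :
      IsRefinement p.natDegree J B (refinementOfMonic J B (p + r.1)) := by
    simpa only [natDegree_eq] using isRefinement_refinementOfMonic (J := J) (monic r) (mem r)
  refine card_eq_index_of_surjective (φ := fun r : degreeLTPart B p.natDegree =>
    ⟨refinementOfMonic J B (p + r.1), isRefinement r⟩) ?_ fun r s => ?_
  · rintro ⟨I, hI⟩
    obtain ⟨q, hqI, hq, hqp⟩ := leadingCoeffNth_eq_top_iff.1 hI.leadingCoeffNth_eq_top
    refine ⟨⟨q - p, sub_mem_degreeLTPart hp hpB hq (hI.le hqI) hqp⟩, Subtype.ext ?_⟩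
    rw [← hqp] at hI
    simpa only [add_sub_cancel] using (hI.eq_refinementOfMonic hq hqI).symm
  · rw [Subtype.mk.injEq, refinementOfMonic_eq_iff (monic r) (mem r) (monic s)
      ((natDegree_eq r).trans (natDegree_eq s).symm), natDegree_eq, add_sub_add_left_eq_sub,
      neg_add_eq_sub]
    rfl

end Nontrivial
end Refinement

section LeadingFactors

variable {A : Type*} [CommRing A] {f g : ℕ → Ideal A} {I B : Ideal A[X]} {m : ℕ}

/-- The ideals of leading coefficients of `I` are `L k = f k * f (k + 1) * ⋯ * f (m - 1)`; only the
factors `f k` with `k < m` matter, and `L k = ⊤` for `k ≥ m`. -/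
def HasLeadingFactors (f : ℕ → Ideal A) (m : ℕ) (I : Ideal A[X]) : Prop :=
  ∀ k, I.leadingCoeffNth k = ∏ i ∈ Finset.Ico k m, f i

theorem HasLeadingFactors.leadingCoeffNth_eq_top (h : HasLeadingFactors f m I) {k : ℕ}
    (hk : m ≤ k) : I.leadingCoeffNth k = ⊤ := by
  rw [h k, Finset.Ico_eq_empty_of_le hk, Finset.prod_empty, Ideal.one_eq_top]

theorem hasLeadingFactors_zero_iff : HasLeadingFactors f 0 I ↔ I = ⊤ := by
  refine ⟨fun h => ?_, ?_⟩
  · rw [Ideal.eq_top_iff_one, ← C_1, ← Ideal.mem_leadingCoeffNth_zero,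
      h.leadingCoeffNth_eq_top le_rfl]
    exact Submodule.mem_top
  · rintro rfl k
    rw [Finset.Ico_eq_empty_of_le (Nat.zero_le k), Finset.prod_empty, Ideal.one_eq_top,
      Ideal.eq_top_iff_one, mem_leadingCoeffNth_iff_exists_coeff_eq]
    exact ⟨X ^ k, Submodule.mem_top, natDegree_X_pow_le k, coeff_X_pow_self k⟩

variable [IsDedekindDomain A]

theorem HasLeadingFactors.leadingCoeffNth_ne_bot (hf : ∀ k, f k ≠ ⊥)
    (hI : HasLeadingFactors f m I) (k : ℕ) : I.leadingCoeffNth k ≠ ⊥ := by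
  rw [hI k]
  exact Finset.prod_ne_zero_iff.2 fun i _ => hf i

theorem HasLeadingFactors.of_isRefinement (hf : f m ≠ ⊥) (hB : HasLeadingFactors f m B)
    (h : IsRefinement (m + 1) (f m) B I) : HasLeadingFactors f (m + 1) I := fun k => by
  rcases Nat.lt_or_ge k (m + 1) with hk | hk
  · rw [h.leadingCoeffNth_eq_mul hf hk, hB k, mul_comm,
      Finset.prod_Ico_succ_top (Nat.le_of_lt_succ hk)]
  · rw [Finset.Ico_eq_empty_of_le hk, Finset.prod_empty, Ideal.one_eq_top, ← top_le_iff,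
      ← h.leadingCoeffNth_eq_top]
    exact I.leadingCoeffNth_mono hk

theorem HasLeadingFactors.exists_isRefinement (hf : f m ≠ ⊥) (hI : HasLeadingFactors f (m + 1) I) :
    ∃ B, HasLeadingFactors f m B ∧ IsRefinement (m + 1) (f m) B I := by
  have hm : I.leadingCoeffNth m = f m := by simp [hI m]
  obtain ⟨B, hBI, hB⟩ := PolynomialIdeal.exists_isRefinement
    (hI.leadingCoeffNth_eq_top le_rfl) (hm ▸ hf)
  rw [hm] at hBI
  refine ⟨B, fun k => ?_, hBI⟩
  rcases Nat.lt_or_ge k m with hk | hk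
  · refine mul_left_cancel₀ hf ?_
    rw [← hBI.leadingCoeffNth_eq_mul hf (hk.trans m.lt_succ_self), hI k,
      Finset.prod_Ico_succ_top hk.le, mul_comm]
  · rw [Finset.Ico_eq_empty_of_le hk, Finset.prod_empty, Ideal.one_eq_top, ← top_le_iff, ← hB]
    exact B.leadingCoeffNth_mono hk

theorem HasLeadingFactors.relIndex_smul_degreeLTPart (hf : ∀ k, f k ≠ ⊥)
    (hB : HasLeadingFactors f m B) :
    (f m • degreeLTPart B (m + 1)).toAddSubgroup.relIndex
      (degreeLTPart B (m + 1)).toAddSubgroup = Nat.card (A ⧸ f m) ^ (m + 1) :=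
  PolynomialIdeal.relIndex_smul_degreeLTPart (hf m) B fun k _ => hB.leadingCoeffNth_ne_bot hf k

theorem HasLeadingFactors.card_quotient_eq_prod (hf : ∀ k, f k ≠ ⊥) (hI : HasLeadingFactors f m I) :
    Nat.card (A[X] ⧸ I) = ∏ k ∈ Finset.range m, Nat.card (A ⧸ f k) ^ (k + 1) := by
  induction m generalizing I with
  | zero =>
    rw [hasLeadingFactors_zero_iff.1 hI, Finset.prod_range_zero]
    exact Submodule.cardQuot_top A[X] A[X]
  | succ m ih =>
    obtain ⟨B, hB, hBI⟩ := hI.exists_isRefinement (hf m)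
    rw [hBI.card_quotient_eq, hB.relIndex_smul_degreeLTPart hf, ih hB, Finset.prod_range_succ_comm]

theorem card_hasLeadingFactors (hf : ∀ k, f k ≠ ⊥) (hfin : ∀ k, Nat.card (A ⧸ f k) ≠ 0) (m : ℕ) :
    Nat.card {I // HasLeadingFactors f m I} =
      ∏ k ∈ Finset.range m, Nat.card (A ⧸ f k) ^ (k + 1) := by
  induction m with
  | zero => simp [hasLeadingFactors_zero_iff]
  | succ m ih =>
    rw [Finset.prod_range_succ_comm, ← ih]
    refine card_eq_mul_card_of_fibers (R := fun B I => IsRefinement (m + 1) (f m) B.1 I.1) ?_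
      (pow_ne_zero _ (hfin m)) ?_
    · rintro ⟨I, hI⟩
      obtain ⟨B, hB, hBI⟩ := hI.exists_isRefinement (hf m)
      exact ⟨⟨B, hB⟩, hBI, fun B' hB'I => Subtype.ext <| le_antisymm
        (hB'I.le_of_isRefinement (hf m) hBI) (hBI.le_of_isRefinement (hf m) hB'I)⟩
    · rintro ⟨B, hB⟩
      rw [← hB.relIndex_smul_degreeLTPart hf,
        ← card_isRefinement (hB.leadingCoeffNth_eq_top m.le_succ)]
      exact Nat.card_congr (Equiv.subtypeSubtypeEquivSubtype (hB.of_isRefinement (hf m)))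

theorem exists_hasLeadingFactors (hI : ∀ k, I.leadingCoeffNth k ≠ ⊥)
    (hm : I.leadingCoeffNth m = ⊤) :
    ∃ f : ℕ → Ideal A, (∀ k, f k ≠ ⊥) ∧ (∀ k, m ≤ k → f k = ⊤) ∧ HasLeadingFactors f m I := by
  have hstep (k : ℕ) : ∃ J, I.leadingCoeffNth k = I.leadingCoeffNth (k + 1) * J :=
    Ideal.dvd_iff_le.2 (I.leadingCoeffNth_mono k.le_succ)
  choose f hf using hstep
  have htop (k : ℕ) (hk : m ≤ k) : I.leadingCoeffNth k = ⊤ :=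
    top_le_iff.1 (hm ▸ I.leadingCoeffNth_mono hk)
  refine ⟨f, fun k hk => hI k (by rw [hf k, hk, Ideal.mul_bot]), fun k hk => ?_, fun k => ?_⟩
  · simpa only [htop _ hk, htop _ (hk.trans k.le_succ), Ideal.top_mul] using (hf k).symm
  · rcases le_total k m with hk | hk
    · induction hk using Nat.decreasingInduction with
      | self => rw [hm, Finset.Ico_self, Finset.prod_empty, Ideal.one_eq_top]
      | of_succ k hk ih => rw [hf k, ih, mul_comm, Finset.prod_eq_prod_Ico_succ_bot hk]
    · rw [htop k hk, Finset.Ico_eq_empty_of_le hk, Finset.prod_empty, Ideal.one_eq_top]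

theorem HasLeadingFactors.eq_of_lt (hf : ∀ k, f k ≠ ⊥) (hfI : HasLeadingFactors f m I)
    (hgI : HasLeadingFactors g m I) {k : ℕ} (hk : k < m) : f k = g k := by
  refine mul_right_cancel₀ (hfI.leadingCoeffNth_ne_bot hf (k + 1)) ?_
  calc f k * I.leadingCoeffNth (k + 1)
    _ = I.leadingCoeffNth k := by
      rw [hfI (k + 1), ← Finset.prod_eq_prod_Ico_succ_bot hk, ← hfI k]
    _ = g k * I.leadingCoeffNth (k + 1) := by
      rw [hgI (k + 1), ← Finset.prod_eq_prod_Ico_succ_bot hk, ← hgI k]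

end LeadingFactors

section FiniteQuotient

variable {A : Type*} [CommRing A]

theorem leadingCoeffNth_ne_bot [Infinite A] (I : Ideal A[X]) [Finite (A[X] ⧸ I)] (k : ℕ) :
    I.leadingCoeffNth k ≠ ⊥ := by
  intro hk
  have h0 : I.leadingCoeffNth 0 = ⊥ := le_bot_iff.1 (hk ▸ I.leadingCoeffNth_mono k.zero_le)
  refine not_injective_infinite_finite (fun a : A => Ideal.Quotient.mk I (C a)) fun a b hab => ?_
  have hmem : C (a - b) ∈ I := by rw [C_sub]; exact Ideal.Quotient.eq.1 hab
  rwa [← Ideal.mem_leadingCoeffNth_zero, h0, Ideal.mem_bot, sub_eq_zero] at hmem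

theorem leadingCoeffNth_card_quotient_eq_top (I : Ideal A[X]) [Finite (A[X] ⧸ I)] :
    I.leadingCoeffNth (Nat.card (A[X] ⧸ I)) = ⊤ := by
  set n := Nat.card (A[X] ⧸ I) with hn
  obtain ⟨i, j, hij, h⟩ : ∃ i j : Fin (n + 1), i < j ∧
      Ideal.Quotient.mk I (X ^ (j : ℕ)) = Ideal.Quotient.mk I (X ^ (i : ℕ)) := by
    have := Fintype.ofFinite (A[X] ⧸ I)
    obtain ⟨i, j, hne, h⟩ := Fintype.exists_ne_map_eq_of_card_lt
      (fun i : Fin (n + 1) => Ideal.Quotient.mk I (X ^ (i : ℕ))) (by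
        rw [Fintype.card_fin, ← Nat.card_eq_fintype_card, ← hn]; exact n.lt_succ_self)
    rcases lt_or_gt_of_ne hne with hij | hij
    · exact ⟨i, j, hij, h.symm⟩
    · exact ⟨j, i, hij, h⟩
  have hjn : (j : ℕ) ≤ n := Nat.le_of_lt_succ j.2
  have hji : (j : ℕ) ≠ i := Fin.val_ne_of_ne hij.ne'
  rw [Ideal.eq_top_iff_one]
  refine I.leadingCoeffNth_mono hjn (mem_leadingCoeffNth_iff_exists_coeff_eq.2
    ⟨X ^ (j : ℕ) - X ^ (i : ℕ), Ideal.Quotient.eq.1 h, ?_, ?_⟩)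
  · exact (natDegree_sub_le_of_le (natDegree_X_pow_le _) (natDegree_X_pow_le _)).trans_eq
      (max_eq_left hij.le)
  · rw [coeff_sub, coeff_X_pow_self, coeff_X_pow, if_neg hji, sub_zero]

end FiniteQuotient

section IdealSequences

variable {A : Type*} [CommRing A] {f : ℕ+ → Ideal A} {n : ℕ}

/-- The finitely supported sequences `(I_d)_{d ≥ 1}` of nonzero ideals with `∏ N(I_d) ^ d = n`. An
infinite quotient has `Nat.card` zero, so for `n ≠ 0` all ideals in such a sequence have finite
index. -/
def idealSequences (A : Type*) [CommRing A] (n : ℕ) : Set (ℕ+ → Ideal A) :=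
  {f | (∀ d, f d ≠ ⊥) ∧ {d | f d ≠ ⊤}.Finite ∧ ∏ᶠ d : ℕ+, Nat.card (A ⧸ f d) ^ (d : ℕ) = n}

theorem finprod_card_quotient_pow_eq_prod_range (hf : ∀ k, n ≤ k → f k.succPNat = ⊤) :
    ∏ᶠ d : ℕ+, Nat.card (A ⧸ f d) ^ (d : ℕ) =
      ∏ k ∈ Finset.range n, Nat.card (A ⧸ f k.succPNat) ^ (k + 1) := by
  rw [← finprod_comp_equiv Equiv.pnatEquivNat.symm]
  refine finprod_eq_prod_of_mulSupport_subset _ fun k hk => ?_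
  by_contra hkn
  have htop : f k.succPNat = ⊤ := hf k (by simpa using hkn)
  exact hk (by simp [htop])

theorem card_quotient_pow_dvd_of_mem_idealSequences (hf : f ∈ idealSequences A n) (d : ℕ+) :
    Nat.card (A ⧸ f d) ^ (d : ℕ) ∣ n := by
  obtain ⟨-, hfin, hprod⟩ := hf
  rw [← hprod]
  exact finprod_mem_dvd d (hfin.subset fun d hd htop => hd (by simp [htop]))

theorem card_quotient_ne_zero_of_mem_idealSequences (hn : 0 < n) (hf : f ∈ idealSequences A n)
    (d : ℕ+) : Nat.card (A ⧸ f d) ≠ 0 := fun h => by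
  have hdvd := card_quotient_pow_dvd_of_mem_idealSequences hf d
  rw [h, zero_pow d.ne_zero, zero_dvd_iff] at hdvd
  exact hn.ne' hdvd

theorem eq_top_of_mem_idealSequences (hn : 0 < n) (hf : f ∈ idealSequences A n) {d : ℕ+}
    (hd : n ≤ d) : f d = ⊤ := by
  by_contra htop
  have hne_one : Nat.card (A ⧸ f d) ≠ 1 := fun h => htop (Submodule.cardQuot_eq_one_iff.1 h)
  have hne_zero := card_quotient_ne_zero_of_mem_idealSequences hn hf d
  have : n < n := calc
    n ≤ d := hd
    _ < 2 ^ (d : ℕ) := Nat.lt_two_pow_self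
    _ ≤ Nat.card (A ⧸ f d) ^ (d : ℕ) := Nat.pow_le_pow_left (by omega) d
    _ ≤ n := Nat.le_of_dvd hn (card_quotient_pow_dvd_of_mem_idealSequences hf d)
  exact this.false

theorem prod_range_eq_of_mem_idealSequences (hn : 0 < n) (hf : f ∈ idealSequences A n) :
    ∏ k ∈ Finset.range n, Nat.card (A ⧸ f k.succPNat) ^ (k + 1) = n := by
  rw [← finprod_card_quotient_pow_eq_prod_range, hf.2.2]
  exact fun k hk => eq_top_of_mem_idealSequences hn hf (hk.trans k.le_succ)

variable [IsDedekindDomain A]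

theorem existsUnique_idealSequences_hasLeadingFactors [Infinite A] (hn : 0 < n) {I : Ideal A[X]}
    (hI : Nat.card (A[X] ⧸ I) = n) :
    ∃! f : idealSequences A n, HasLeadingFactors (fun k => f.1 k.succPNat) n I := by
  have : Finite (A[X] ⧸ I) := Nat.finite_of_card_ne_zero (hI ▸ hn.ne')
  obtain ⟨g, hg, hgtop, hgI⟩ := exists_hasLeadingFactors (leadingCoeffNth_ne_bot I)
    (hI ▸ leadingCoeffNth_card_quotient_eq_top I)
  have hmem : (fun d : ℕ+ => g d.natPred) ∈ idealSequences A n := by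
    refine ⟨fun d => hg _, ?_, ?_⟩
    · exact ((Set.finite_Iio n).preimage PNat.natPred_injective.injOn).subset fun d hd =>
        not_le.1 fun hnd => hd (hgtop _ hnd)
    · rw [finprod_card_quotient_pow_eq_prod_range (by simpa using hgtop)]
      simpa using (hgI.card_quotient_eq_prod hg).symm.trans hI
  refine ⟨⟨_, hmem⟩, by simpa using hgI, ?_⟩
  rintro ⟨f, hf⟩ hfI
  refine Subtype.ext (funext fun d => ?_)
  rcases Nat.lt_or_ge d.natPred n with hd | hd
  · simpa using hfI.eq_of_lt (fun k => hf.1 _) hgI hd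
  · exact (eq_top_of_mem_idealSequences hn hf (hd.trans (Nat.pred_le d))).trans (hgtop _ hd).symm

theorem card_hasLeadingFactors_of_mem_idealSequences (hn : 0 < n) (hf : f ∈ idealSequences A n) :
    Nat.card {I : {I : Ideal A[X] // Nat.card (A[X] ⧸ I) = n} //
      HasLeadingFactors (fun k => f k.succPNat) n I.1} = n := by
  have hprod := prod_range_eq_of_mem_idealSequences hn hf
  rw [Nat.card_congr (Equiv.subtypeSubtypeEquivSubtype fun {I} hI =>
      (HasLeadingFactors.card_quotient_eq_prod (fun k => hf.1 _) hI).trans hprod),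
    card_hasLeadingFactors (fun k => hf.1 _) fun k =>
      card_quotient_ne_zero_of_mem_idealSequences hn hf _]
  exact hprod

end IdealSequences

end PolynomialIdeal

open PolynomialIdeal in
theorem card_ideals_polynomial_ringOfIntegers_general (A : Type*) [CommRing A] [IsDedekindDomain A]
    [Infinite A] (n : ℕ) (hn : 0 < n) :
    Nat.card {I : Ideal A[X] // Nat.card (A[X] ⧸ I) = n} =
      n * Nat.card {f : ℕ+ → Ideal A //
        (∀ d, f d ≠ ⊥) ∧ {d | f d ≠ ⊤}.Finite ∧
          ∏ᶠ d : ℕ+, Nat.card (A ⧸ f d) ^ (d : ℕ) = n} := by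
  change _ = n * Nat.card (idealSequences A n)
  refine card_eq_mul_card_of_fibers
    (R := fun (f : idealSequences A n) (I : {I : Ideal A[X] // Nat.card (A[X] ⧸ I) = n}) =>
      HasLeadingFactors (fun k => f.1 k.succPNat) n I.1)
    (fun I => ?_) hn.ne' (fun f => ?_)
  · exact existsUnique_idealSequences_hasLeadingFactors hn I.2
  · exact card_hasLeadingFactors_of_mem_idealSequences hn f.2

/-- Coefficient form of `ζ(O_K[X], s) = ∏_{d≥1} ζ_K(d(s-1))`: the number of ideals of
`O_K[X]` of index `n` equals `n` times the number of finitely supported sequences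
`(I_d)_{d≥1}` of nonzero ideals of `O_K` with `∏_d N(I_d)^d = n`. -/
theorem card_ideals_polynomial_ringOfIntegers (K : Type*) [Field K] [NumberField K]
    (n : ℕ) (hn : 0 < n) :
    Nat.card {I : Ideal (Polynomial (𝓞 K)) // Nat.card (Polynomial (𝓞 K) ⧸ I) = n} =
      n * Nat.card {f : ℕ+ → Ideal (𝓞 K) //
        (∀ d, f d ≠ ⊥) ∧ {d | f d ≠ ⊤}.Finite ∧
          ∏ᶠ d : ℕ+, (Ideal.absNorm (f d)) ^ (d : ℕ) = n} := by
  exact card_ideals_polynomial_ringOfIntegers_general (𝓞 K) n hn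
end
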